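/- arXiv:1506.01272 — 9 statements merged into one kernel-verified Lean document; each statement's English description precedes it below -/
import Mathlib

section
/- Let θ be a real algebraic number of degree 3 over ℚ with minimal polynomial x³ + λ₂x² + λ₁x + λ₀ (λ₀, λ₁, λ₂ ∈ ℚ). Let a, b, c, d, e ∈ ℤ with ae − bd = 1, and suppose η ∈ ℝ satisfies η = aθ + bθ² and η² = c + dθ + eθ². Then a³ − 2λ₂a²b + (λ₂² + λ₁)ab² + (λ₀ − λ₁λ₂)b³ = 1. -/
open Polynomial

/-!
Reducing `η² = (aθ + bθ²)²` modulo the cubic relation for `θ` writes it in the basis `1, θ, θ²`.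
These powers are linearly independent over `ℚ` because the minimal polynomial has degree 3
(`coeffs_eq_zero_of_cubic_minpoly`), so comparing coefficients expresses `d` and `e` as quadratic
forms in `a, b`. Substituting these in `a * e - b * d = 1` gives the claim.
-/

lemma coeffs_eq_zero_of_cubic_minpoly {θ : ℝ} {l0 l1 l2 : ℚ}
    (hmin : minpoly ℚ θ = X ^ 3 + C l2 * X ^ 2 + C l1 * X + C l0) {u0 u1 u2 : ℚ}
    (h : (u2 : ℝ) * θ ^ 2 + (u1 : ℝ) * θ + (u0 : ℝ) = 0) : u1 = 0 ∧ u2 = 0 := by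
  have hq : C u2 * X ^ 2 + C u1 * X + C u0 = (0 : ℚ[X]) := by
    by_contra hne
    have hle := minpoly.degree_le_of_ne_zero ℚ θ hne (by simpa using h)
    have hdeg : (X ^ 3 + C l2 * X ^ 2 + C l1 * X + C l0 : ℚ[X]).degree = 3 := by
      compute_degree!
    rw [hmin, hdeg] at hle
    exact absurd (hle.trans degree_quadratic_le) (by decide)
  constructor
  · simpa [coeff_X, coeff_C] using congrArg (fun p => p.coeff 1) hq
  · simpa [coeff_X, coeff_C] using congrArg (fun p => p.coeff 2) hq

/-- If `θ ∈ ℝ` has minimal polynomial `x³ + λ₂x² + λ₁x + λ₀` over `ℚ`,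
`a,b,c,d,e ∈ ℤ` satisfy `ae - bd = 1`, and `η ∈ ℝ` satisfies `η = aθ + bθ²`
and `η² = c + dθ + eθ²`, then `a³ - 2λ₂a²b + (λ₂² + λ₁)ab² + (λ₀ - λ₁λ₂)b³ = 1`. -/
theorem stmt9 (θ : ℝ) (l0 l1 l2 : ℚ)
    (hmin : minpoly ℚ θ = X ^ 3 + C l2 * X ^ 2 + C l1 * X + C l0)
    (a b c d e : ℤ) (hdet : a * e - b * d = 1) (η : ℝ)
    (hη : η = (a : ℝ) * θ + (b : ℝ) * θ ^ 2)
    (hη2 : η ^ 2 = (c : ℝ) + (d : ℝ) * θ + (e : ℝ) * θ ^ 2) :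
    (a : ℚ) ^ 3 - 2 * l2 * (a : ℚ) ^ 2 * (b : ℚ) + (l2 ^ 2 + l1) * (a : ℚ) * (b : ℚ) ^ 2
      + (l0 - l1 * l2) * (b : ℚ) ^ 3 = 1 := by
  have hθ : θ ^ 3 + (l2 : ℝ) * θ ^ 2 + (l1 : ℝ) * θ + (l0 : ℝ) = 0 := by
    have := minpoly.aeval ℚ θ
    rw [hmin] at this
    simpa using this
  rw [hη] at hη2
  -- The coefficients of `η² - (c + dθ + eθ²)` in the basis `1, θ, θ²`, reduced by
  -- `θ⁴ = (l2² - l1)θ² + (l1 l2 - l0)θ + l0 l2`.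
  obtain ⟨hd, he⟩ := coeffs_eq_zero_of_cubic_minpoly hmin
    (u0 := -2 * a * b * l0 + b ^ 2 * (l0 * l2) - c)
    (u1 := -2 * a * b * l1 + b ^ 2 * (l1 * l2 - l0) - d)
    (u2 := a ^ 2 - 2 * a * b * l2 + b ^ 2 * (l2 ^ 2 - l1) - e) (by
      push_cast
      linear_combination hη2 - (2 * (a : ℝ) * b + (b : ℝ) ^ 2 * (θ - l2)) * hθ)
  have hdet' : (a : ℚ) * e - b * d = 1 := by exact_mod_cast hdet
  linear_combination hdet' + (a : ℚ) * he - (b : ℚ) * hd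
end

section
/- Let θ be a real algebraic number whose degree over ℚ is 2 or 3. Then there are only finitely many values of η modulo ℤ with θ ~ η: there exists a finite set S ⊆ ℝ such that for every real number η with θ ~ η there are s ∈ S and n ∈ ℤ with η = s + n. -/
/-!
If `θ ~ η`, the lattices spanned by `1, θ, θ²` and by `1, η, η²` coincide.

In degree 2, writing `η = a + bθ` with `a`, `b` rational of bounded denominator, the fact that `θ`
is an integer combination of `1, η, η²` bounds `b` by a divisibility (`quadratic_case`).

In degree 3, write `η = s + xθ + yθ²` with integers `s, x, y`. The determinant condition depends
only on `(x, y)` and is a cubic Thue equation `F(x, y) = ±1` with `F` irreducible (`cubic_case`).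
Thus the claim rests on Thue's theorem that such an equation has finitely many solutions
(`thue_finite`), which is proved here by Thue's method. A solution with large `y` provides a
rational number `p/q` within `K/q³` of a root `α` (`exists_near_root`). Siegel's lemma yields integer
polynomials `P`, `Q` of degree less than `25n` with coefficients at most `C ^ n` such that `P - αQ`
vanishes to order `16n` at `α` (`exists_aux`). Given two approximations `p₁/q₁` and `p₂/q₂`, the
Wronskian of `P` and `Q` shows that some Hasse derivative of order `j ≤ 2n + 1` satisfies
`P_j(p₁/q₁) ≠ (p₂/q₂) Q_j(p₁/q₁)` (`exists_hasse_ne_zero`). The difference is a nonzero rational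
with denominator dividing `q₁ ^ (25n) q₂`, but it is also very small when `q₁` is large and `q₂` is
between `q₁ ^ (14n)` and `q₁ ^ (14n + 14)` (`thue_gap`, `thue_den_bounded`), a contradiction.

All roots are taken in `ℂ`, so that real and non-real roots are treated alike.
-/

/-- `θ ~ η` iff some `A ∈ GL(3,ℤ)` (integer matrix with determinant `±1`)
sends `(1, θ, θ²)ᵗ` to `(1, η, η²)ᵗ`. -/
def matRel (θ η : ℝ) : Prop :=
  ∃ A : Matrix (Fin 3) (Fin 3) ℤ, (A.det = 1 ∨ A.det = -1) ∧
    (A.map fun n : ℤ => (n : ℝ)).mulVec ![1, θ, θ ^ 2] = ![1, η, η ^ 2]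

open Polynomial

/-! ### Auxiliary polynomials -/

theorem hasse_sum {R : Type*} [CommRing R] (T : R[X]) (N : ℕ) (h : T.natDegree < N) (j : ℕ)
    (z : R) : (hasseDeriv j T).eval z =
      ∑ i ∈ Finset.range N, (i.choose j : R) * T.coeff i * z ^ (i - j) := by
  rw [hasseDeriv_apply, sum_over_range' _ _ N h, eval_finsetSum]
  · simp [eval_monomial]
  · simp

/-- Powers of a root `z` of `X³ + aX² + bX + c` are integer combinations of `1, z, z²` whose
coefficients grow at most exponentially and do not depend on the choice of the root. -/
theorem pow_reduce (a b c : ℤ) : ∃ r : ℕ → Fin 3 → ℤ,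
    (∀ m l, |r m l| ≤ (1 + |a| + |b| + |c|) ^ m) ∧
    ∀ z : ℂ, z ^ 3 + a * z ^ 2 + b * z + c = 0 →
      ∀ m, z ^ m = ∑ l : Fin 3, (r m l : ℂ) * z ^ (l : ℕ) := by
  have key : ∀ m : ℕ, ∃ v : Fin 3 → ℤ, (∀ l, |v l| ≤ (1 + |a| + |b| + |c|) ^ m) ∧
      ∀ z : ℂ, z ^ 3 + a * z ^ 2 + b * z + c = 0 →
        z ^ m = ∑ l : Fin 3, (v l : ℂ) * z ^ (l : ℕ) := by
    intro m
    induction m with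
    | zero =>
      refine ⟨![1, 0, 0], ?_, ?_⟩
      · intro l; fin_cases l <;> simp
      · intro z _; simp [Fin.sum_univ_three]
    | succ m ih =>
      obtain ⟨v, hv, hz⟩ := ih
      have ha := abs_nonneg a
      have hb := abs_nonneg b
      have hc := abs_nonneg c
      have hB : 0 ≤ (1 + |a| + |b| + |c|) ^ m := by positivity
      have h0 := hv 0
      have h1 := hv 1
      have h2 := hv 2
      have n2 := abs_nonneg (v 2)
      refine ⟨![-(v 2 * c), v 0 - v 2 * b, v 1 - v 2 * a], ?_, ?_⟩
      · have step : ∀ s : ℤ, |v 2 * s| ≤ (1 + |a| + |b| + |c|) ^ m * |s| := fun s => by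
          rw [abs_mul]; gcongr
        rw [pow_succ]
        intro l
        fin_cases l
        · simp only [Fin.zero_eta, Matrix.cons_val_zero, abs_neg]
          have := step c
          nlinarith [mul_nonneg hB ha, mul_nonneg hB hb]
        · simp only [Fin.mk_one, Matrix.cons_val_one, Matrix.cons_val_zero]
          have := step b
          have := abs_sub (v 0) (v 2 * b)
          nlinarith [mul_nonneg hB ha, mul_nonneg hB hc]
        · simp only [Fin.reduceFinMk, Matrix.cons_val]
          have := step a
          have := abs_sub (v 1) (v 2 * a)
          nlinarith [mul_nonneg hB hb, mul_nonneg hB hc]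
      · intro z hzz
        rw [pow_succ, hz z hzz]
        simp [Fin.sum_univ_three]
        linear_combination (v 2 : ℂ) * hzz
  choose r h1 h2 using key
  exact ⟨r, h1, fun z hz m => h2 m z hz⟩

attribute [local instance] Matrix.seminormedAddCommGroup in
/-- Thue's auxiliary polynomials: `P(X) - z Q(X)` vanishes to order `16n` at `X = z` for every root
`z` of the cubic. This is a system of `48n` integer linear equations in the `50n` coefficients of
`P` and `Q`, so Siegel's lemma (with exponent `48n / (50n - 48n) = 24`) solves it with
coefficients of size at most `K ^ n`. -/
theorem exists_aux (a b c : ℤ) : ∃ K : ℝ, 1 ≤ K ∧ ∀ n : ℕ, 1 ≤ n → ∃ P Q : ℤ[X],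
    ¬ (P = 0 ∧ Q = 0) ∧ P.natDegree < 25 * n ∧ Q.natDegree < 25 * n ∧
    (∀ i, |(P.coeff i : ℝ)| ≤ K ^ n) ∧ (∀ i, |(Q.coeff i : ℝ)| ≤ K ^ n) ∧
    ∀ z : ℂ, z ^ 3 + a * z ^ 2 + b * z + c = 0 →
      (X - C z) ^ (16 * n) ∣ P.map (Int.castRingHom ℂ) - C z * Q.map (Int.castRingHom ℂ) := by
  obtain ⟨r, hr, hred⟩ := pow_reduce a b c
  set H : ℤ := 1 + |a| + |b| + |c| with hH
  have hH1 : 1 ≤ H := by have := abs_nonneg a; have := abs_nonneg b; have := abs_nonneg c; linarith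
  have hH1' : (1 : ℝ) ≤ H := by exact_mod_cast hH1
  refine ⟨(8 * H : ℝ) ^ 600, one_le_pow₀ (by linarith), fun n hn => ?_⟩
  -- Row `(j, l)` expresses the vanishing of the coefficient of `z ^ l` in the `j`-th Hasse
  -- derivative of `P - z Q` at `z`; the columns are the coefficients of `P` and of `Q`.
  let A : Matrix (Fin (16 * n) × Fin 3) (Fin (25 * n) ⊕ Fin (25 * n)) ℤ := fun jl =>
    Sum.elim (fun i => ((i : ℕ).choose jl.1 : ℤ) * r (i - jl.1) jl.2)
      (fun i => -(((i : ℕ).choose jl.1 : ℤ) * r (i - jl.1 + 1) jl.2))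
  have hent : ∀ (i j m : ℕ) (l : Fin 3), i < 25 * n → (m ≤ 25 * n) →
      |(i.choose j : ℤ) * r m l| ≤ (2 * H) ^ (25 * n) := by
    intro i j m l hi hm
    rw [abs_mul, mul_pow]
    have h1 : |(i.choose j : ℤ)| ≤ 2 ^ (25 * n) := by
      rw [Nat.abs_cast]
      calc ((i.choose j : ℕ) : ℤ) ≤ ((2 ^ i : ℕ) : ℤ) := by exact_mod_cast Nat.choose_le_two_pow i j
        _ ≤ 2 ^ (25 * n) := by push_cast; exact pow_le_pow_right₀ (by norm_num) hi.le
    have h2 : |r m l| ≤ H ^ (25 * n) := (hr m l).trans (pow_le_pow_right₀ hH1 hm)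
    gcongr
  have hA : ‖A‖ ≤ (2 * H : ℝ) ^ (25 * n) := by
    rw [Matrix.norm_le_iff (by positivity)]
    rintro ⟨j, l⟩ (i | i)
    · simp only [A, Sum.elim_inl, Int.norm_eq_abs]
      exact_mod_cast hent i j _ l i.2 (by omega)
    · by_cases hij : (i : ℕ) < j
      · simp only [A, Sum.elim_inr, norm_neg, Nat.choose_eq_zero_of_lt hij]
        simp
        positivity
      · simp only [A, Sum.elim_inr, norm_neg, Int.norm_eq_abs]
        exact_mod_cast hent i j _ l i.2 (by omega)
  obtain ⟨t, ht0, hAt, htn⟩ := Int.Matrix.exists_ne_zero_int_vec_norm_le A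
    (by simp; omega) (by simp; omega)
  have hbd : ‖t‖ ≤ ((8 * H : ℝ) ^ 600) ^ n := by
    refine htn.trans ?_
    have hn' : (n : ℝ) ≠ 0 := by positivity
    have he : ((Fintype.card (Fin (16 * n) × Fin 3) : ℝ) /
        (Fintype.card (Fin (25 * n) ⊕ Fin (25 * n)) - Fintype.card (Fin (16 * n) × Fin 3))) =
        (24 : ℕ) := by
      simp
      field_simp
      ring_nf
    rw [he, Real.rpow_natCast]
    have h1 : (Fintype.card (Fin (25 * n) ⊕ Fin (25 * n)) : ℝ) ≤ 4 ^ (25 * n) := by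
      have : 50 * n < 2 ^ (50 * n) := Nat.lt_two_pow_self
      have h4 : (4 : ℝ) ^ (25 * n) = 2 ^ (50 * n) := by
        rw [show (4 : ℝ) = 2 ^ 2 by norm_num, ← pow_mul]; congr 1; ring
      rw [h4]
      simp
      calc (25 * n + 25 * n : ℝ) = ((50 * n : ℕ) : ℝ) := by push_cast; ring
        _ ≤ ((2 ^ (50 * n) : ℕ) : ℝ) := by exact_mod_cast this.le
        _ = _ := by push_cast; rfl
    have h2 : max 1 ‖A‖ ≤ (2 * H : ℝ) ^ (25 * n) :=
      max_le (one_le_pow₀ (by linarith)) hA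
    calc ((Fintype.card (Fin (25 * n) ⊕ Fin (25 * n)) : ℝ) * max 1 ‖A‖) ^ 24
        ≤ (4 ^ (25 * n) * (2 * H : ℝ) ^ (25 * n)) ^ 24 := by gcongr
      _ = ((8 * H : ℝ) ^ 600) ^ n := by
        rw [← mul_pow, ← pow_mul, ← pow_mul]
        congr 1 <;> ring
  have hti : ∀ s, |(t s : ℝ)| ≤ ((8 * H : ℝ) ^ 600) ^ n := fun s => by
    rw [← Int.norm_eq_abs]; exact (norm_le_pi_norm t s).trans hbd
  have hcoef : ∀ (v : Fin (25 * n) → ℤ), (∀ i, |(v i : ℝ)| ≤ ((8 * H : ℝ) ^ 600) ^ n) → ∀ i,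
      |((ofFn (25 * n) v).coeff i : ℝ)| ≤ ((8 * H : ℝ) ^ 600) ^ n := by
    intro v hv i
    by_cases hi : i < 25 * n
    · rw [ofFn_coeff_eq_val_of_lt v hi]; exact hv _
    · rw [ofFn_coeff_eq_zero_of_ge v (not_lt.mp hi)]; simp; positivity
  refine ⟨ofFn (25 * n) (fun i => t (Sum.inl i)), ofFn (25 * n) (fun i => t (Sum.inr i)), ?_,
    ofFn_natDegree_lt (by omega) _, ofFn_natDegree_lt (by omega) _,
    hcoef _ fun i => hti _, hcoef _ fun i => hti _, ?_⟩
  · rintro ⟨h1, h2⟩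
    apply ht0
    funext s
    rcases s with i | i
    · have := congrArg (fun p => p.coeff i) h1
      simpa [ofFn_coeff_eq_val_of_lt _ i.2] using this
    · have := congrArg (fun p => p.coeff i) h2
      simpa [ofFn_coeff_eq_val_of_lt _ i.2] using this
  · intro z hz
    rw [X_sub_C_pow_dvd_iff, ← taylor_apply, X_pow_dvd_iff]
    intro j hj
    have hP : ∀ v : Fin (25 * n) → ℤ,
        ((ofFn (25 * n) v).map (Int.castRingHom ℂ)).natDegree < 25 * n :=
      fun v => lt_of_le_of_lt natDegree_map_le (ofFn_natDegree_lt (by omega) _)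
    have hev : ∀ v : Fin (25 * n) → ℤ,
        (hasseDeriv j ((ofFn (25 * n) v).map (Int.castRingHom ℂ))).eval z =
        ∑ i : Fin (25 * n), ((i : ℕ).choose j : ℂ) * v i * z ^ ((i : ℕ) - j) := by
      intro v
      rw [hasse_sum _ _ (hP v), Finset.sum_range]
      refine Finset.sum_congr rfl fun i _ => ?_
      simp [coeff_map, ofFn_coeff_eq_val_of_lt v i.2]
    rw [taylor_coeff, ← smul_eq_C_mul, map_sub, map_smul, eval_sub, eval_smul, smul_eq_mul,
      hev, hev, Finset.mul_sum]
    have hl : ∀ l : Fin 3, ∑ i : Fin (25 * n), ((i : ℕ).choose j : ℤ) * r (i - j) l * t (Sum.inl i) -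
        ∑ i : Fin (25 * n), ((i : ℕ).choose j : ℤ) * r (i - j + 1) l * t (Sum.inr i) = 0 := by
      intro l
      have := congrFun hAt (⟨j, hj⟩, l)
      simpa [Matrix.mulVec, dotProduct, A, Finset.sum_neg_distrib, ← sub_eq_add_neg] using this
    have hlC : ∀ l : Fin 3, ∑ i : Fin (25 * n), ((i : ℕ).choose j : ℂ) * r (i - j) l * t (Sum.inl i) -
        ∑ i : Fin (25 * n), ((i : ℕ).choose j : ℂ) * r (i - j + 1) l * t (Sum.inr i) = 0 :=
      fun l => by exact_mod_cast hl l
    calc _ = ∑ l : Fin 3, z ^ (l : ℕ) *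
          (∑ i : Fin (25 * n), ((i : ℕ).choose j : ℂ) * r (i - j) l * t (Sum.inl i) -
        ∑ i : Fin (25 * n), ((i : ℕ).choose j : ℂ) * r (i - j + 1) l * t (Sum.inr i)) := by
          simp only [mul_sub, Finset.sum_sub_distrib, Finset.mul_sum]
          congr 1
          · rw [Finset.sum_comm]
            refine Finset.sum_congr rfl fun i _ => ?_
            rw [hred z hz, Finset.mul_sum]
            exact Finset.sum_congr rfl fun l _ => by ring
          · rw [Finset.sum_comm]
            refine Finset.sum_congr rfl fun i _ => ?_
            rw [show z * (((i : ℕ).choose j : ℂ) * t (Sum.inr i) * z ^ ((i : ℕ) - j)) =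
              ((i : ℕ).choose j : ℂ) * t (Sum.inr i) * z ^ ((i : ℕ) - j + 1) by ring,
              hred z hz, Finset.mul_sum]
            exact Finset.sum_congr rfl fun l _ => by ring
      _ = 0 := by simp [hlC]

/-! ### Nonvanishing -/

/-- Replacing `P` by `P - s Q` does not change the Wronskian, so vanishing of `P - s Q` to order
`m + 1` at `a` makes the Wronskian vanish to order `m`. -/
theorem dvd_wronskian {F : Type*} [Field F] (P Q : F[X]) (s a : F) (m : ℕ)
    (h : (X - C a) ^ (m + 1) ∣ P - C s * Q) : (X - C a) ^ m ∣ wronskian P Q := by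
  have e : wronskian P Q = (P - C s * Q) * derivative Q - derivative (P - C s * Q) * Q := by
    simp only [wronskian, derivative_sub, derivative_mul, derivative_C]; ring
  rw [e]
  refine dvd_sub (Dvd.dvd.mul_right ((pow_dvd_pow _ m.le_succ).trans h) _)
    (Dvd.dvd.mul_right ?_ _)
  simpa using pow_sub_one_dvd_derivative_of_pow_dvd h

theorem roots_degree_le {I : Type*} [Fintype I] (β : I → ℂ) (hβ : Function.Injective β)
    (e : I → ℕ) (W : ℂ[X]) (hW : W ≠ 0) (h : ∀ i, (X - C (β i)) ^ e i ∣ W) :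
    ∑ i, e i ≤ W.natDegree := by
  have hd : ∏ i, (X - C (β i)) ^ e i ∣ W := by
    refine Fintype.prod_dvd_of_coprime (fun i j hij => ?_) h
    exact (pairwise_coprime_X_sub_C hβ hij).pow
  have := natDegree_le_of_dvd hd hW
  rw [natDegree_prod_of_monic _ _ fun i _ => (monic_X_sub_C _).pow _] at this
  simpa using this

/-- If the Wronskian vanished, then `P = s g` and `Q = t g` with rational constants `s, t`; as the
`α i` are irrational, `g` itself would vanish to order `k` at all three of them, contradicting
`deg g < N ≤ 3k`. -/
theorem wronskian_ne_zero_of_dvd (α : Fin 3 → ℂ) (hα : Function.Injective α)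
    (hirr : ∀ i (r : ℚ), α i ≠ r) (k N : ℕ) (hN : N ≤ 3 * k) (P Q : ℤ[X])
    (hPQ : ¬ (P = 0 ∧ Q = 0)) (hP : P.natDegree < N) (hQ : Q.natDegree < N)
    (h : ∀ i, (X - C (α i)) ^ k ∣
      P.map (Int.castRingHom ℂ) - C (α i) * Q.map (Int.castRingHom ℂ)) :
    wronskian (P.map (Int.castRingHom ℂ)) (Q.map (Int.castRingHom ℂ)) ≠ 0 := by
  intro hW
  set ι := algebraMap ℚ ℂ with hι
  have hmapι : ∀ T : ℤ[X], (T.map (Int.castRingHom ℚ)).map ι = T.map (Int.castRingHom ℂ) := by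
    intro T; rw [map_map]; congr 1
  set p := P.map (Int.castRingHom ℚ) with hp
  set q := Q.map (Int.castRingHom ℚ) with hq
  have hinjQ : Function.Injective (Int.castRingHom ℚ) := Int.cast_injective
  have hpq0 : ¬ (p = 0 ∧ q = 0) := by
    rintro ⟨h1, h2⟩
    exact hPQ ⟨(Polynomial.map_eq_zero_iff hinjQ).mp h1, (Polynomial.map_eq_zero_iff hinjQ).mp h2⟩
  have hw : wronskian p q = 0 := by
    apply Polynomial.map_injective ι ι.injective
    rw [← hmapι, ← hmapι, ← hp, ← hq] at hW
    simpa [wronskian, derivative_map] using hW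
  have hpdeg : p.natDegree < N := lt_of_le_of_lt natDegree_map_le hP
  have hqdeg : q.natDegree < N := lt_of_le_of_lt natDegree_map_le hQ
  -- Dividing by the gcd leaves coprime polynomials with zero Wronskian, that is, constants.
  set g := EuclideanDomain.gcd p q with hg
  have hg0 : g ≠ 0 := fun h0 => hpq0 (EuclideanDomain.gcd_eq_zero_iff.mp h0)
  obtain ⟨p1, hp1⟩ := EuclideanDomain.gcd_dvd_left p q
  obtain ⟨q1, hq1⟩ := EuclideanDomain.gcd_dvd_right p q
  rw [← hg] at hp1 hq1
  have hcop : IsCoprime p1 q1 := by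
    refine ⟨EuclideanDomain.gcdA p q, EuclideanDomain.gcdB p q, ?_⟩
    have hb := EuclideanDomain.gcd_eq_gcd_ab p q
    rw [← hg] at hb
    apply mul_left_cancel₀ hg0
    calc g * (EuclideanDomain.gcdA p q * p1 + EuclideanDomain.gcdB p q * q1)
        = (g * p1) * EuclideanDomain.gcdA p q + (g * q1) * EuclideanDomain.gcdB p q := by ring
      _ = g * 1 := by rw [← hp1, ← hq1, ← hb, mul_one]
  have hw1 : wronskian p1 q1 = 0 := by
    have : wronskian p q = g ^ 2 * wronskian p1 q1 := by
      rw [hp1, hq1]; simp only [wronskian, derivative_mul]; ring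
    rw [hw] at this
    exact (mul_eq_zero.mp this.symm).resolve_left (pow_ne_zero _ hg0)
  obtain ⟨d1, d2⟩ := hcop.wronskian_eq_zero_iff.mp hw1
  obtain ⟨s, hs⟩ : ∃ s, p1 = C s := ⟨_, eq_C_of_derivative_eq_zero d1⟩
  obtain ⟨t, ht⟩ : ∃ t, q1 = C t := ⟨_, eq_C_of_derivative_eq_zero d2⟩
  have hst : ¬ (s = 0 ∧ t = 0) := by
    rintro ⟨rfl, rfl⟩
    exact hpq0 ⟨by rw [hp1, hs]; simp, by rw [hq1, ht]; simp⟩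
  have hgdeg : g.natDegree < N := by
    by_cases hs0 : s = 0
    · have ht0 : t ≠ 0 := fun h => hst ⟨hs0, h⟩
      rwa [hq1, ht, natDegree_mul_C ht0] at hqdeg
    · rwa [hp1, hs, natDegree_mul_C hs0] at hpdeg
  have hgι : g.map ι ≠ 0 := (Polynomial.map_ne_zero_iff ι.injective).mpr hg0
  have hdvd : ∀ i, (X - C (α i)) ^ k ∣ g.map ι := by
    intro i
    have hne : (s : ℂ) - α i * t ≠ 0 := by
      intro h0
      by_cases ht0 : t = 0
      · subst ht0
        apply hst
        simpa using h0
      · apply hirr i (s / t)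
        have : (t : ℂ) ≠ 0 := by exact_mod_cast ht0
        push_cast
        field_simp
        linear_combination -h0
    have hi := h i
    rw [← hmapι, ← hmapι, ← hp, ← hq, hp1, hq1, hs, ht] at hi
    have e : (g * C s).map ι - C (α i) * (g * C t).map ι =
        g.map ι * C ((s : ℂ) - α i * t) := by
      simp [hι]; ring
    rw [e] at hi
    exact (IsUnit.dvd_mul_right (isUnit_C.mpr hne.isUnit)).mp hi
  have := roots_degree_le α hα (fun _ => k) (g.map ι) hgι hdvd
  rw [natDegree_map] at this
  simp at this
  omega

/-- If `P - y Q` vanished to order `2n + 2` at `x`, the Wronskian of `P` and `Q`, of degree at most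
`50n - 3`, would have zeros of order `2n + 1` at `x` and `16n - 1` at each `α i`, which are
`50n - 2` zeros in all. -/
theorem exists_hasse_ne_zero (α : Fin 3 → ℂ) (hα : Function.Injective α)
    (hirr : ∀ i (r : ℚ), α i ≠ r) (n : ℕ) (hn : 1 ≤ n) (P Q : ℤ[X])
    (hPQ : ¬ (P = 0 ∧ Q = 0)) (hP : P.natDegree < 25 * n) (hQ : Q.natDegree < 25 * n)
    (h : ∀ i, (X - C (α i)) ^ (16 * n) ∣
      P.map (Int.castRingHom ℂ) - C (α i) * Q.map (Int.castRingHom ℂ)) (x : ℚ) (y : ℂ) :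
    ∃ j ≤ 2 * n + 1, (hasseDeriv j (P.map (Int.castRingHom ℂ))).eval (x : ℂ) -
      y * (hasseDeriv j (Q.map (Int.castRingHom ℂ))).eval (x : ℂ) ≠ 0 := by
  by_contra! hcon
  have hW := wronskian_ne_zero_of_dvd α hα hirr (16 * n) (25 * n) (by omega) P Q hPQ hP hQ h
  set p := P.map (Int.castRingHom ℂ) with hp
  set q := Q.map (Int.castRingHom ℂ) with hq
  have hx : (X - C (x : ℂ)) ^ (2 * n + 1) ∣ wronskian p q := by
    apply dvd_wronskian p q y
    rw [X_sub_C_pow_dvd_iff, ← taylor_apply, X_pow_dvd_iff]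
    intro j hj
    rw [taylor_coeff, ← smul_eq_C_mul, map_sub, map_smul, eval_sub, eval_smul, smul_eq_mul]
    exact hcon j (by omega)
  have hinj : Function.Injective (Fin.cons (x : ℂ) α : Fin 4 → ℂ) := by
    rw [Fin.cons_injective_iff]
    refine ⟨?_, hα⟩
    rintro ⟨i, hi⟩
    exact hirr i x hi
  have key := roots_degree_le (Fin.cons (x : ℂ) α : Fin 4 → ℂ) hinj
    (Fin.cons (2 * n + 1) (fun _ => 16 * n - 1) : Fin 4 → ℕ) _ hW (by
      intro i
      refine Fin.cases ?_ (fun i => ?_) i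
      · simpa using hx
      · simp only [Fin.cons_succ]
        apply dvd_wronskian p q (α i)
        rw [Nat.sub_add_cancel (by omega)]
        exact h i)
  have h1 := natDegree_wronskian_lt_add hW
  have h2 : p.natDegree ≤ P.natDegree := natDegree_map_le
  have h3 : q.natDegree ≤ Q.natDegree := natDegree_map_le
  simp [Fin.sum_univ_succ] at key
  omega

/-! ### Estimates -/

theorem norm_hasse_le (T : ℂ[X]) (N : ℕ) (hT : T.natDegree < N) (B M : ℝ) (hM : 1 ≤ M)
    (hB : ∀ i, ‖T.coeff i‖ ≤ B) (z : ℂ) (hz : ‖z‖ ≤ M) (j : ℕ) :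
    ‖(hasseDeriv j T).eval z‖ ≤ 4 ^ N * B * M ^ N := by
  have hB0 : 0 ≤ B := (norm_nonneg _).trans (hB 0)
  rw [hasse_sum T N hT]
  have hN : (N : ℝ) ≤ 2 ^ N := by exact_mod_cast (Nat.lt_two_pow_self (n := N)).le
  calc _ ≤ ∑ i ∈ Finset.range N, 2 ^ N * B * M ^ N := by
        refine norm_sum_le_of_le _ fun i hi => ?_
        have hi' := Finset.mem_range.mp hi
        rw [norm_mul, norm_mul, norm_pow]
        have h1 : ‖(i.choose j : ℂ)‖ ≤ 2 ^ N := by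
          rw [Complex.norm_natCast]
          calc (i.choose j : ℝ) ≤ 2 ^ i := by exact_mod_cast Nat.choose_le_two_pow i j
            _ ≤ 2 ^ N := pow_le_pow_right₀ (by norm_num) hi'.le
        have h2 : ‖z‖ ^ (i - j) ≤ M ^ N :=
          (pow_le_pow_left₀ (norm_nonneg _) hz _).trans (pow_le_pow_right₀ hM (by omega))
        have := hB i
        gcongr
    _ = N * (2 ^ N * B * M ^ N) := by simp
    _ ≤ 2 ^ N * (2 ^ N * B * M ^ N) := by gcongr
    _ = 4 ^ N * B * M ^ N := by
        rw [show (4 : ℝ) = 2 * 2 by norm_num, mul_pow]; ring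

/-- Expanding around `z`, where `T` vanishes to order `k`, the `j`-th Hasse derivative of `T` is
`O(|x - z| ^ (k - j))` near `z`. -/
theorem norm_hasse_le_of_dvd (T : ℂ[X]) (N : ℕ) (hT : T.natDegree < N) (B M : ℝ) (hM : 1 ≤ M)
    (hB : ∀ i, ‖T.coeff i‖ ≤ B) (z x : ℂ) (hz : ‖z‖ ≤ M) (k j : ℕ)
    (hk : (X - C z) ^ k ∣ T) (hx : ‖x - z‖ ≤ 1) :
    ‖(hasseDeriv j T).eval x‖ ≤ 16 ^ N * B * M ^ N * ‖x - z‖ ^ (k - j) := by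
  have hB0 : 0 ≤ B := (norm_nonneg _).trans (hB 0)
  have e : (hasseDeriv j T).eval x = (hasseDeriv j (taylor z T)).eval (x - z) := by
    rw [← taylor_coeff, ← taylor_coeff, taylor_taylor, sub_add_cancel]
  rw [X_sub_C_pow_dvd_iff, ← taylor_apply, X_pow_dvd_iff] at hk
  rw [e, hasse_sum _ N (by rwa [natDegree_taylor])]
  have hN : (N : ℝ) ≤ 2 ^ N := by exact_mod_cast (Nat.lt_two_pow_self (n := N)).le
  calc _ ≤ ∑ i ∈ Finset.range N, 2 ^ N * (4 ^ N * B * M ^ N) * ‖x - z‖ ^ (k - j) := by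
        refine norm_sum_le_of_le _ fun i hi => ?_
        have hi' := Finset.mem_range.mp hi
        by_cases hik : i < k
        · rw [hk i hik]; simp; positivity
        rw [norm_mul, norm_mul, norm_pow]
        have h1 : ‖(i.choose j : ℂ)‖ ≤ 2 ^ N := by
          rw [Complex.norm_natCast]
          calc (i.choose j : ℝ) ≤ 2 ^ i := by exact_mod_cast Nat.choose_le_two_pow i j
            _ ≤ 2 ^ N := pow_le_pow_right₀ (by norm_num) hi'.le
        have h2 : ‖x - z‖ ^ (i - j) ≤ ‖x - z‖ ^ (k - j) :=
          pow_le_pow_of_le_one (norm_nonneg _) hx (by omega)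
        have h3 : ‖(taylor z T).coeff i‖ ≤ 4 ^ N * B * M ^ N := by
          rw [taylor_coeff]; exact norm_hasse_le T N hT B M hM hB z hz i
        gcongr
    _ = N * (2 ^ N * (4 ^ N * B * M ^ N) * ‖x - z‖ ^ (k - j)) := by simp
    _ ≤ 2 ^ N * (2 ^ N * (4 ^ N * B * M ^ N) * ‖x - z‖ ^ (k - j)) := by gcongr
    _ = 16 ^ N * B * M ^ N * ‖x - z‖ ^ (k - j) := by
        rw [show (16 : ℝ) = 2 * 2 * 4 by norm_num, mul_pow, mul_pow]; ring

theorem exists_int_hasse (P : ℤ[X]) (N : ℕ) (hP : P.natDegree < N) (j : ℕ) (p q : ℤ)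
    (hq : q ≠ 0) : ∃ w : ℤ, (q : ℂ) ^ N *
      (hasseDeriv j (P.map (Int.castRingHom ℂ))).eval ((p : ℂ) / q) = w := by
  have hq' : (q : ℂ) ≠ 0 := by exact_mod_cast hq
  refine ⟨∑ i ∈ Finset.range N, (i.choose j : ℤ) * P.coeff i * p ^ (i - j) * q ^ (N - (i - j)), ?_⟩
  rw [hasse_sum _ N (lt_of_le_of_lt natDegree_map_le hP), Finset.mul_sum]
  push_cast
  refine Finset.sum_congr rfl fun i hi => ?_
  have hi' := Finset.mem_range.mp hi
  have : (q : ℂ) ^ N = q ^ (N - (i - j)) * q ^ (i - j) := by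
    rw [← pow_add]; congr 1; omega
  rw [this, div_pow, coeff_map]
  simp
  field_simp

/-- Two rational approximations `p₁/q₁`, `p₂/q₂` of the same root repel each other: the nonzero
integer `q₁ ^ (25n) q₂ (P_j(p₁/q₁) - (p₂/q₂) Q_j(p₁/q₁))`, where the subscript denotes the `j`-th
Hasse derivative and `j ≤ 2n + 1`, has absolute value at least `1`, and is small if both
approximations are good. -/
theorem thue_gap (a b c : ℤ) (α : Fin 3 → ℂ) (hα : Function.Injective α)
    (hirr : ∀ i (r : ℚ), α i ≠ r)
    (hroot : ∀ i, α i ^ 3 + a * α i ^ 2 + b * α i + c = 0) (i : Fin 3) :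
    ∃ L : ℝ, 1 ≤ L ∧ ∀ n : ℕ, 1 ≤ n → ∀ p₁ q₁ p₂ q₂ : ℤ, 0 < q₁ → 0 < q₂ →
      ‖(p₁ : ℂ) / q₁ - α i‖ ≤ 1 →
      1 ≤ (q₁ : ℝ) ^ (25 * n) * q₂ * L ^ n *
        (‖(p₁ : ℂ) / q₁ - α i‖ ^ (14 * n - 1) + ‖(p₂ : ℂ) / q₂ - α i‖) := by
  obtain ⟨K, hK, haux⟩ := exists_aux a b c
  set M : ℝ := ‖α i‖ + 1 with hMdef
  have hM : 1 ≤ M := by have := norm_nonneg (α i); linarith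
  refine ⟨16 ^ 25 * (K * (1 + M)) * M ^ 25, ?_, ?_⟩
  · have : 1 ≤ K * (1 + M) := one_le_mul_of_one_le_of_one_le hK (by linarith)
    exact one_le_mul_of_one_le_of_one_le (one_le_mul_of_one_le_of_one_le (by norm_num) this)
      (one_le_pow₀ hM)
  intro n hn p₁ q₁ p₂ q₂ hq₁ hq₂ hx
  obtain ⟨P, Q, hPQ, hP, hQ, hPc, hQc, hdvd⟩ := haux n hn
  obtain ⟨j, hj, hne⟩ := exists_hasse_ne_zero α hα hirr n hn P Q hPQ hP hQ
    (fun i => hdvd _ (hroot i)) (p₁ / q₁ : ℚ) ((p₂ : ℂ) / q₂)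
  have hLn : (16 ^ 25 * (K * (1 + M)) * M ^ 25) ^ n =
      16 ^ (25 * n) * (K ^ n * (1 + M) ^ n) * M ^ (25 * n) := by
    rw [mul_pow, mul_pow, mul_pow, ← pow_mul, ← pow_mul]
  rw [hLn]
  push_cast at hne
  set x : ℂ := (p₁ : ℂ) / q₁ with hxdef
  set y : ℂ := (p₂ : ℂ) / q₂ with hydef
  set p := P.map (Int.castRingHom ℂ) with hp
  set q := Q.map (Int.castRingHom ℂ) with hq
  have hpd : p.natDegree < 25 * n := lt_of_le_of_lt natDegree_map_le hP
  have hqd : q.natDegree < 25 * n := lt_of_le_of_lt natDegree_map_le hQ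
  have hpc : ∀ i, ‖p.coeff i‖ ≤ K ^ n := fun i => by
    rw [hp, coeff_map, eq_intCast, Complex.norm_intCast]; exact hPc i
  have hqc : ∀ i, ‖q.coeff i‖ ≤ K ^ n := fun i => by
    rw [hq, coeff_map, eq_intCast, Complex.norm_intCast]; exact hQc i
  have hKn : 0 ≤ K ^ n := by positivity
  have hM1 : 1 + M ≤ (1 + M) ^ n := le_self_pow₀ (by linarith) (by omega)
  have hTc : ∀ l, ‖(p - C (α i) * q).coeff l‖ ≤ K ^ n * (1 + M) ^ n := by
    intro l
    rw [coeff_sub, coeff_C_mul]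
    calc _ ≤ ‖p.coeff l‖ + ‖α i‖ * ‖q.coeff l‖ := by
          rw [← norm_mul]; exact norm_sub_le _ _
      _ ≤ K ^ n + M * K ^ n := by
          have := hpc l
          have := hqc l
          have : ‖α i‖ ≤ M := by linarith
          gcongr
      _ = K ^ n * (1 + M) := by ring
      _ ≤ _ := by gcongr
  have hTd : (p - C (α i) * q).natDegree < 25 * n := by
    have h1 := natDegree_sub_le p (C (α i) * q)
    have h2 := natDegree_C_mul_le (α i) q
    have h3 : max p.natDegree (C (α i) * q).natDegree < 25 * n := max_lt hpd (by omega)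
    omega
  have hB1 := norm_hasse_le_of_dvd _ _ hTd _ M hM hTc (α i) x (by linarith) (16 * n) j
    (hdvd _ (hroot i)) hx
  have hxM : ‖x‖ ≤ M := by
    have := norm_add_le (x - α i) (α i)
    rw [sub_add_cancel] at this
    linarith
  have hqc' : ∀ i, ‖q.coeff i‖ ≤ K ^ n * (1 + M) ^ n := fun i =>
    (hqc i).trans (le_mul_of_one_le_right hKn (one_le_pow₀ (by linarith)))
  have hB2 := norm_hasse_le _ _ hqd _ M hM hqc' x hxM j
  rw [← smul_eq_C_mul, map_sub, map_smul, eval_sub, eval_smul, smul_eq_mul] at hB1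
  set u := (hasseDeriv j p).eval x
  set v := (hasseDeriv j q).eval x
  have hxp : ‖x - α i‖ ^ (16 * n - j) ≤ ‖x - α i‖ ^ (14 * n - 1) :=
    pow_le_pow_of_le_one (norm_nonneg _) hx (by omega)
  have hup : ‖u - y * v‖ ≤ 16 ^ (25 * n) * (K ^ n * (1 + M) ^ n) * M ^ (25 * n) *
      (‖x - α i‖ ^ (14 * n - 1) + ‖y - α i‖) := by
    calc ‖u - y * v‖ = ‖(u - α i * v) - (y - α i) * v‖ := by congr 1; ring
      _ ≤ ‖u - α i * v‖ + ‖y - α i‖ * ‖v‖ := by rw [← norm_mul]; exact norm_sub_le _ _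
      _ ≤ 16 ^ (25 * n) * (K ^ n * (1 + M) ^ n) * M ^ (25 * n) * ‖x - α i‖ ^ (14 * n - 1) +
          ‖y - α i‖ * (16 ^ (25 * n) * (K ^ n * (1 + M) ^ n) * M ^ (25 * n)) := by
        gcongr
        · exact hB1.trans (by gcongr)
        · refine hB2.trans ?_
          gcongr
          norm_num
      _ = _ := by ring
  obtain ⟨w₁, hw₁⟩ := exists_int_hasse P _ hP j p₁ q₁ hq₁.ne'
  obtain ⟨w₂, hw₂⟩ := exists_int_hasse Q _ hQ j p₁ q₁ hq₁.ne'
  have hq₂' : (q₂ : ℂ) ≠ 0 := by exact_mod_cast hq₂.ne'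
  have hq₁' : (q₁ : ℂ) ≠ 0 := by exact_mod_cast hq₁.ne'
  have hinteger : (q₁ : ℂ) ^ (25 * n) * q₂ * (u - y * v) = ((q₂ * w₁ - p₂ * w₂ : ℤ) : ℂ) := by
    push_cast
    rw [← hw₁, ← hw₂, hydef]
    field_simp
    rfl
  have hone : (1 : ℝ) ≤ ‖(q₁ : ℂ) ^ (25 * n) * q₂ * (u - y * v)‖ := by
    have h0 : (q₁ : ℂ) ^ (25 * n) * q₂ * (u - y * v) ≠ 0 :=
      mul_ne_zero (mul_ne_zero (pow_ne_zero _ hq₁') hq₂') hne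
    rw [hinteger] at h0 ⊢
    rw [Complex.norm_intCast]
    have : (q₂ * w₁ - p₂ * w₂ : ℤ) ≠ 0 := by exact_mod_cast h0
    exact_mod_cast Int.one_le_abs this
  rw [norm_mul, norm_mul, norm_pow, Complex.norm_intCast, Complex.norm_intCast,
    abs_of_pos (by exact_mod_cast hq₁), abs_of_pos (by exact_mod_cast hq₂)] at hone
  have hq₁r : (0 : ℝ) < q₁ := by exact_mod_cast hq₁
  have hq₂r : (0 : ℝ) < q₂ := by exact_mod_cast hq₂
  refine hone.trans ?_
  rw [mul_assoc ((q₁ : ℝ) ^ (25 * n) * q₂)]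
  gcongr

/-! ### Thue's theorem for cubics -/

/-- Thue's theorem for cubic irrationals: approximations of order `K / q ^ 3` have bounded
denominators. -/
theorem thue_den_bounded (a b c : ℤ) (α : Fin 3 → ℂ) (hα : Function.Injective α)
    (hirr : ∀ i (r : ℚ), α i ≠ r)
    (hroot : ∀ i, α i ^ 3 + a * α i ^ 2 + b * α i + c = 0) (i : Fin 3) (K : ℝ) (hK : 1 ≤ K) :
    ∃ B : ℝ, ∀ p q : ℤ, 0 < q → ‖(p : ℂ) / q - α i‖ ≤ K / (q : ℝ) ^ 3 → (q : ℝ) ≤ B := by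
  by_contra! hcon
  obtain ⟨L, hL, hgap⟩ := thue_gap a b c α hα hirr hroot i
  have hLK : 1 ≤ L * K ^ 14 := one_le_mul_of_one_le_of_one_le hL (one_le_pow₀ hK)
  have hKLK : K ≤ L * K ^ 14 :=
    (le_self_pow₀ hK (by norm_num)).trans (le_mul_of_one_le_left (by positivity) hL)
  obtain ⟨p₁, q₁, hq₁, hx, hq₁D⟩ := hcon (2 * (L * K ^ 14))
  obtain ⟨p₂, q₂, hq₂, hy, hq₂D⟩ := hcon (((q₁ : ℝ) ^ 14) ^ 17)
  set x : ℂ := (p₁ : ℂ) / q₁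
  set y : ℂ := (p₂ : ℂ) / q₂
  have gap := fun n hn => hgap n hn p₁ q₁ p₂ q₂ hq₁ hq₂
  set Q : ℝ := (q₁ : ℝ) with hQ
  set R : ℝ := (q₂ : ℝ) with hR
  have hQ1 : 1 < Q := by linarith
  have hR1 : 0 < R := by rw [hR]; exact_mod_cast hq₂
  have hQ14 : 1 < Q ^ 14 := one_lt_pow₀ hQ1 (by norm_num)
  -- The order of vanishing is matched to the ratio `log R / log Q`, which lies in `[14n, 14n + 14)`.
  obtain ⟨n, hn1, hn2⟩ := exists_nat_pow_near (x := R) (y := Q ^ 14)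
    ((one_le_pow₀ hQ14.le).trans hq₂D.le) hQ14
  have hn : 17 ≤ n := by
    have : (Q ^ 14) ^ 17 < (Q ^ 14) ^ (n + 1) := hq₂D.trans hn2
    have := (pow_lt_pow_iff_right₀ hQ14).mp this
    omega
  have hQ0 : 0 < Q := by linarith
  have hx1 : ‖x - α i‖ ≤ 1 := by
    refine hx.trans ?_
    rw [div_le_one (by positivity)]
    have : Q ≤ Q ^ 3 := le_self_pow₀ hQ1.le (by norm_num)
    linarith
  have gap := gap n (by omega) hx1
  have hhalf : (L * K ^ 14) ^ n / Q ^ n ≤ (1 / 2) ^ 17 := by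
    rw [← div_pow]
    have h1 : L * K ^ 14 / Q ≤ 1 / 2 := by
      rw [div_le_div_iff₀ hQ0 (by norm_num)]; linarith
    calc _ ≤ (1 / 2 : ℝ) ^ n := pow_le_pow_left₀ (by positivity) h1 n
      _ ≤ (1 / 2 : ℝ) ^ 17 := pow_le_pow_of_le_one (by norm_num) (by norm_num) hn
  have hKn : K ^ (14 * n - 1) ≤ (K ^ 14) ^ n := by
    rw [← pow_mul]; exact pow_le_pow_right₀ hK (by omega)
  have hKn' : K ≤ (K ^ 14) ^ n := by
    rw [← pow_mul]; exact le_self_pow₀ hK (by omega)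
  have T1 : Q ^ (25 * n) * R * L ^ n * ‖x - α i‖ ^ (14 * n - 1) ≤ (1 / 2) ^ 17 := by
    refine le_trans ?_ hhalf
    calc Q ^ (25 * n) * R * L ^ n * ‖x - α i‖ ^ (14 * n - 1)
        ≤ Q ^ (25 * n) * (Q ^ 14) ^ (n + 1) * L ^ n * (K / Q ^ 3) ^ (14 * n - 1) := by gcongr
      _ = L ^ n * K ^ (14 * n - 1) * (Q ^ (39 * n + 14) / Q ^ (42 * n - 3)) := by
        rw [div_pow, ← pow_mul, ← pow_mul, show 3 * (14 * n - 1) = 42 * n - 3 by omega,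
          show 39 * n + 14 = 25 * n + 14 * (n + 1) by ring, pow_add]
        ring
      _ ≤ L ^ n * (K ^ 14) ^ n * (1 / Q ^ n) := by
        refine mul_le_mul (by gcongr) ?_ (by positivity) (by positivity)
        rw [div_le_div_iff₀ (by positivity) (by positivity), one_mul, ← pow_add]
        exact pow_le_pow_right₀ hQ1.le (by omega)
      _ = _ := by rw [mul_pow]; ring
  have T2 : Q ^ (25 * n) * R * L ^ n * ‖y - α i‖ ≤ (1 / 2) ^ 17 := by
    refine le_trans ?_ hhalf
    calc Q ^ (25 * n) * R * L ^ n * ‖y - α i‖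
        ≤ Q ^ (25 * n) * R * L ^ n * (K / R ^ 3) := by gcongr
      _ = L ^ n * K * (Q ^ (25 * n) / R ^ 2) := by field_simp
      _ ≤ L ^ n * (K ^ 14) ^ n * (Q ^ (25 * n) / ((Q ^ 14) ^ n) ^ 2) := by gcongr
      _ ≤ L ^ n * (K ^ 14) ^ n * (1 / Q ^ n) := by
        refine mul_le_mul_of_nonneg_left ?_ (by positivity)
        rw [div_le_div_iff₀ (by positivity) (by positivity), one_mul, ← pow_add, ← pow_mul,
          ← pow_mul]
        exact pow_le_pow_right₀ hQ1.le (by omega)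
      _ = _ := by rw [mul_pow]; ring
  rw [mul_add] at gap
  norm_num at T1 T2
  linarith

/-- A small value of the cubic form at `(p, q)` forces `p / q` to be close to one of the roots: the
nearest root contributes the only small factor, the others being bounded below by half the minimal
distance between roots. -/
theorem exists_near_root (α : Fin 3 → ℂ) (hα : Function.Injective α) (m : ℝ) :
    ∃ K : ℝ, 1 ≤ K ∧ ∀ p q : ℤ, 0 < q → ‖∏ i, ((p : ℂ) - α i * q)‖ ≤ m →
      ∃ i, ‖(p : ℂ) / q - α i‖ ≤ K / (q : ℝ) ^ 3 := by
  obtain ⟨δ, hδ, hsep⟩ : ∃ δ : ℝ, 0 < δ ∧ ∀ i j, i ≠ j → δ ≤ ‖α i - α j‖ := by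
    have hpos : ∀ i j, i ≠ j → 0 < ‖α i - α j‖ := fun i j hij =>
      norm_pos_iff.mpr (sub_ne_zero.mpr (hα.ne hij))
    refine ⟨min ‖α 0 - α 1‖ (min ‖α 0 - α 2‖ ‖α 1 - α 2‖),
      lt_min (hpos _ _ (by decide)) (lt_min (hpos _ _ (by decide)) (hpos _ _ (by decide))), ?_⟩
    intro i j hij
    fin_cases i <;> fin_cases j <;> first | exact absurd rfl hij | skip
    all_goals simp [norm_sub_rev (α 1) (α 0), norm_sub_rev (α 2)]
  refine ⟨max 1 (m / (δ / 2) ^ 2), le_max_left _ _, fun p q hq hprod => ?_⟩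
  obtain ⟨i, hi⟩ := Finite.exists_min fun i => ‖(p : ℂ) / q - α i‖
  refine ⟨i, ?_⟩
  have hq' : (0 : ℝ) < q := by exact_mod_cast hq
  have hqc : (q : ℂ) ≠ 0 := by exact_mod_cast hq.ne'
  have hfac : ‖∏ i, ((p : ℂ) - α i * q)‖ = (q : ℝ) ^ 3 * ∏ i, ‖(p : ℂ) / q - α i‖ := by
    rw [norm_prod]
    have : ∀ i, ‖(p : ℂ) - α i * q‖ = (q : ℝ) * ‖(p : ℂ) / q - α i‖ := by
      intro i
      have e : (p : ℂ) - α i * q = q * ((p : ℂ) / q - α i) := by field_simp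
      rw [e, norm_mul, Complex.norm_intCast, abs_of_pos hq']
    simp only [this, Finset.prod_mul_distrib]
    simp
  have hlow : ‖(p : ℂ) / q - α i‖ * (δ / 2) ^ 2 ≤ ∏ i, ‖(p : ℂ) / q - α i‖ := by
    rw [← Finset.mul_prod_erase Finset.univ _ (Finset.mem_univ i)]
    have hc : (Finset.univ.erase i).card = 2 := by simp
    gcongr
    rw [← hc, ← Finset.prod_const]
    refine Finset.prod_le_prod (fun _ _ => by positivity) fun l hl => ?_
    have h1 := hsep i l (Finset.ne_of_mem_erase hl).symm
    have h2 := norm_sub_le_norm_sub_add_norm_sub (α i) ((p : ℂ) / q) (α l)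
    rw [norm_sub_rev (α i) ((p : ℂ) / q)] at h2
    have h3 := hi l
    linarith
  rw [hfac] at hprod
  have h1 : ‖(p : ℂ) / q - α i‖ ≤ m / (δ / 2) ^ 2 / (q : ℝ) ^ 3 := by
    rw [le_div_iff₀ (by positivity), le_div_iff₀ (by positivity)]
    calc _ = (q : ℝ) ^ 3 * (‖(p : ℂ) / q - α i‖ * (δ / 2) ^ 2) := by ring
      _ ≤ _ := by gcongr
      _ ≤ m := hprod
  refine h1.trans ?_
  gcongr
  exact le_max_right _ _

/-- The Thue inequality `|F(p, q)| ≤ m` for the cubic form `F(p, q) = ∏ (p - α i q)` has finitely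
many integer solutions. -/
theorem thue_finite (a b c : ℤ) (α : Fin 3 → ℂ) (hα : Function.Injective α)
    (hirr : ∀ i (r : ℚ), α i ≠ r)
    (hroot : ∀ i, α i ^ 3 + a * α i ^ 2 + b * α i + c = 0) (m : ℝ) :
    {v : ℤ × ℤ | ‖∏ i, ((v.1 : ℂ) - α i * v.2)‖ ≤ m}.Finite := by
  obtain ⟨K, hK, hnear⟩ := exists_near_root α hα m
  choose B hB using fun i => thue_den_bounded a b c α hα hirr hroot i K hK
  have hpos : ∃ D : ℝ, ∀ p q : ℤ, 0 < q → ‖∏ i, ((p : ℂ) - α i * q)‖ ≤ m →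
      |(p : ℝ)| ≤ D ∧ |(q : ℝ)| ≤ D := by
    refine ⟨∑ i, |B i| * (1 + ‖α i‖ + K), fun p q hq hm => ?_⟩
    obtain ⟨i, hi⟩ := hnear p q hq hm
    have hq' : (0 : ℝ) < q := by exact_mod_cast hq
    have hq1 : (1 : ℝ) ≤ q := by exact_mod_cast hq
    have hqB : (q : ℝ) ≤ |B i| := (hB i p q hq hi).trans (le_abs_self _)
    have hle : |B i| * (1 + ‖α i‖ + K) ≤ ∑ i, |B i| * (1 + ‖α i‖ + K) :=
      Finset.single_le_sum (f := fun i => |B i| * (1 + ‖α i‖ + K))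
        (fun i _ => by positivity) (Finset.mem_univ i)
    have hα0 := norm_nonneg (α i)
    have hpq : |(p : ℝ)| / q ≤ 1 + ‖α i‖ + K := by
      have e : |(p : ℝ)| / q = ‖(p : ℂ) / q‖ := by
        rw [norm_div, Complex.norm_intCast, Complex.norm_intCast, abs_of_pos hq']
      have h1 := norm_add_le ((p : ℂ) / q - α i) (α i)
      rw [sub_add_cancel, ← e] at h1
      have h2 : K / (q : ℝ) ^ 3 ≤ K := div_le_self (by linarith) (one_le_pow₀ hq1)
      linarith
    constructor
    · rw [div_le_iff₀ hq'] at hpq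
      calc _ ≤ _ := hpq
        _ ≤ (1 + ‖α i‖ + K) * |B i| := by gcongr
        _ ≤ _ := by rw [mul_comm]; exact hle
    · rw [abs_of_pos hq']
      refine hqB.trans (le_trans ?_ hle)
      exact le_mul_of_one_le_right (abs_nonneg _) (by linarith)
  obtain ⟨D, hD⟩ := hpos
  have hall : ∀ p q : ℤ, ‖∏ i, ((p : ℂ) - α i * q)‖ ≤ m →
      |(p : ℝ)| ≤ max D m ∧ |(q : ℝ)| ≤ max D m := by
    intro p q hm
    rcases lt_trichotomy q 0 with hq | hq | hq
    · have e : ∏ i, (((-p : ℤ) : ℂ) - α i * ((-q : ℤ) : ℂ)) = -∏ i, ((p : ℂ) - α i * q) := by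
        simp only [Fin.prod_univ_three]; push_cast; ring
      have := hD (-p) (-q) (by omega) (by rw [e, norm_neg]; exact hm)
      push_cast at this
      rw [abs_neg, abs_neg] at this
      exact ⟨this.1.trans (le_max_left _ _), this.2.trans (le_max_left _ _)⟩
    · subst hq
      have hm' : |(p : ℝ)| ^ 3 ≤ m := by simpa using hm
      have hm0 : 0 ≤ m := le_trans (by positivity) hm'
      refine ⟨le_trans ?_ (le_max_right _ _), by simp [hm0]⟩
      by_cases hp : p = 0
      · simpa [hp] using hm0
      · have : (1 : ℝ) ≤ |(p : ℝ)| := by exact_mod_cast Int.one_le_abs hp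
        exact (le_self_pow₀ this (by norm_num)).trans hm'
    · have := hD p q hq hm
      exact ⟨this.1.trans (le_max_left _ _), this.2.trans (le_max_left _ _)⟩
  set N : ℤ := ⌊max D m⌋
  have hconv : ∀ z : ℤ, |(z : ℝ)| ≤ max D m → z ∈ Set.Icc (-N) N := by
    intro z hz
    have : |z| ≤ N := Int.le_floor.mpr (by exact_mod_cast hz)
    exact abs_le.mp this
  refine ((Set.finite_Icc (-N) N).prod (Set.finite_Icc (-N) N)).subset ?_
  rintro ⟨p, q⟩ hm
  exact ⟨hconv _ (hall p q hm).1, hconv _ (hall p q hm).2⟩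

/-! ### Lattices in quadratic and cubic fields -/

theorem exists_three_roots (f : ℚ[X]) (hf : f.Monic) (hirr : Irreducible f)
    (hdeg : f.natDegree = 3) : ∃ τ : Fin 3 → ℂ, Function.Injective τ ∧
      (∀ i (r : ℚ), τ i ≠ r) ∧ ∀ z : ℂ, ∏ i, (z - τ i) =
        z ^ 3 + f.coeff 2 * z ^ 2 + f.coeff 1 * z + f.coeff 0 := by
  have hcard : Fintype.card (f.rootSet ℂ) = 3 := by
    rw [card_rootSet_eq_natDegree hirr.separable (IsAlgClosed.splits _), hdeg]
  let e := (Fintype.equivFinOfCardEq hcard).symm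
  have hinj : Function.Injective fun i => (e i : ℂ) :=
    Subtype.val_injective.comp e.injective
  have hr : ∀ i, aeval (e i : ℂ) f = 0 := fun i => (mem_rootSet.mp (e i).2).2
  refine ⟨fun i => (e i : ℂ), hinj, ?_, ?_⟩
  · intro i r h
    have h0 := hr i
    simp only at h
    rw [h, show (r : ℂ) = algebraMap ℚ ℂ r from rfl, aeval_algebraMap_apply] at h0
    have h1 : f.IsRoot r := by simpa using h0
    have := degree_eq_one_of_irreducible_of_root hirr h1
    rw [degree_eq_natDegree hf.ne_zero, hdeg] at this
    norm_num at this
  · have hfac : ∏ i, (X - C (e i : ℂ)) = f.map (algebraMap ℚ ℂ) := by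
      refine (eq_of_monic_of_dvd_of_natDegree_le (monic_prod_X_sub_C _ _) (hf.map _) ?_ ?_).symm
      · refine Fintype.prod_dvd_of_coprime (fun i j hij => pairwise_coprime_X_sub_C hinj hij) ?_
        intro i
        rw [dvd_iff_isRoot, IsRoot, eval_map_algebraMap]
        exact hr i
      · rw [natDegree_map, hdeg, natDegree_prod_of_monic _ _ fun i _ => monic_X_sub_C _]
        simp
    intro z
    have := congrArg (eval z) hfac
    rw [eval_prod] at this
    simp only [eval_sub, eval_X, eval_C] at this
    rw [this, eval_map, eval₂_eq_sum_range, hdeg]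
    have h3 : f.coeff 3 = 1 := by rw [← hdeg]; exact hf.coeff_natDegree
    simp [Finset.sum_range_succ, h3]
    ring

theorem eq_zero_of_quadratic (θ : ℝ) (hdeg : 2 < (minpoly ℚ θ).natDegree) (x y z : ℚ)
    (h : (x : ℝ) + y * θ + z * θ ^ 2 = 0) : x = 0 ∧ y = 0 ∧ z = 0 := by
  have h0 : C z * X ^ 2 + C y * X + C x = 0 := by
    refine eq_zero_of_dvd_of_natDegree_lt (minpoly.dvd ℚ θ ?_)
      (lt_of_le_of_lt natDegree_quadratic_le hdeg)
    simp
    linarith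
  have hc := fun i => congrArg (fun p : ℚ[X] => p.coeff i) h0
  refine ⟨by simpa using hc 0, by simpa [coeff_X, coeff_C, coeff_X_pow] using hc 1,
    by simpa [coeff_X, coeff_C, coeff_X_pow] using hc 2⟩

theorem eq_zero_of_linear (θ : ℝ) (hdeg : 1 < (minpoly ℚ θ).natDegree) (x y : ℚ)
    (h : (x : ℝ) + y * θ = 0) : x = 0 ∧ y = 0 := by
  have h0 : C y * X + C x = 0 := by
    refine eq_zero_of_dvd_of_natDegree_lt (minpoly.dvd ℚ θ ?_)
      (lt_of_le_of_lt natDegree_linear_le hdeg)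
    simp
    linarith
  have hc := fun i => congrArg (fun p : ℚ[X] => p.coeff i) h0
  exact ⟨by simpa using hc 0, by simpa [coeff_C] using hc 1⟩

theorem matRel_rows {θ η : ℝ} {A : Matrix (Fin 3) (Fin 3) ℤ}
    (h : (A.map fun n : ℤ => (n : ℝ)).mulVec ![1, θ, θ ^ 2] = ![1, η, η ^ 2]) :
    (A 0 0 + A 0 1 * θ + A 0 2 * θ ^ 2 : ℝ) = 1 ∧
    (A 1 0 + A 1 1 * θ + A 1 2 * θ ^ 2 : ℝ) = η ∧
    (A 2 0 + A 2 1 * θ + A 2 2 * θ ^ 2 : ℝ) = η ^ 2 := by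
  have h0 := congrFun h 0
  have h1 := congrFun h 1
  have h2 := congrFun h 2
  simp [Matrix.mulVec, dotProduct, Fin.sum_univ_three] at h0 h1 h2
  exact ⟨by linarith, by linarith, by linarith⟩

/-- With `θ³ + uθ² + vθ + w = 0`, write `η = s + xθ + yθ²`. The determinant condition becomes
`∏ (x - u y - τ y) = ±1`, the product being over the roots `τ` of the minimal polynomial. After
clearing denominators this is a Thue equation, so there are finitely many pairs `(x, y)`. -/
theorem cubic_case (θ : ℝ) (hθ : IsAlgebraic ℚ θ) (hdeg : (minpoly ℚ θ).natDegree = 3) :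
    ∃ S : Finset ℝ, ∀ η : ℝ, matRel θ η → ∃ s ∈ S, ∃ n : ℤ, η = s + n := by
  have hinteger := hθ.isIntegral
  have hmonic := minpoly.monic hinteger
  obtain ⟨τ, hτ, hτirr, hprod⟩ :=
    exists_three_roots (minpoly ℚ θ) hmonic (minpoly.irreducible hinteger) hdeg
  have hθ3 : θ ^ 3 + (minpoly ℚ θ).coeff 2 * θ ^ 2 + (minpoly ℚ θ).coeff 1 * θ +
      (minpoly ℚ θ).coeff 0 = 0 := by
    have h := minpoly.aeval ℚ θ
    have h3 : (minpoly ℚ θ).coeff 3 = 1 := by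
      conv_lhs => rw [← hdeg]
      exact hmonic.coeff_natDegree
    rw [aeval_eq_sum_range, hdeg] at h
    simp [Finset.sum_range_succ, h3, Rat.smul_def] at h
    linarith
  set u := (minpoly ℚ θ).coeff 2
  set v := (minpoly ℚ θ).coeff 1
  set w := (minpoly ℚ θ).coeff 0
  obtain ⟨d, hd, a, b, c, ha, hb, hc⟩ : ∃ d : ℤ, d ≠ 0 ∧ ∃ a b c : ℤ,
      (d * u : ℚ) = a ∧ (d ^ 2 * v : ℚ) = b ∧ (d ^ 3 * w : ℚ) = c := by
    have hu : (u.den : ℚ) ≠ 0 := by exact_mod_cast u.den_ne_zero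
    have hv : (v.den : ℚ) ≠ 0 := by exact_mod_cast v.den_ne_zero
    have hw : (w.den : ℚ) ≠ 0 := by exact_mod_cast w.den_ne_zero
    refine ⟨u.den * v.den * w.den, by positivity, u.num * v.den * w.den,
      u.den ^ 2 * v.den * w.den ^ 2 * v.num, u.den ^ 3 * v.den ^ 3 * w.den ^ 2 * w.num, ?_, ?_, ?_⟩
    · push_cast; linear_combination (v.den * w.den : ℚ) * Rat.mul_den_eq_num u
    · push_cast
      linear_combination (u.den ^ 2 * v.den * w.den ^ 2 : ℚ) * Rat.mul_den_eq_num v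
    · push_cast
      linear_combination (u.den ^ 3 * v.den ^ 3 * w.den ^ 2 : ℚ) * Rat.mul_den_eq_num w
  have haC : (d * u : ℂ) = a := by exact_mod_cast congrArg (Rat.cast : ℚ → ℂ) ha
  have hbC : (d ^ 2 * v : ℂ) = b := by exact_mod_cast congrArg (Rat.cast : ℚ → ℂ) hb
  have hcC : (d ^ 3 * w : ℂ) = c := by exact_mod_cast congrArg (Rat.cast : ℚ → ℂ) hc
  have hdC : (d : ℂ) ≠ 0 := by exact_mod_cast hd
  have hfin := thue_finite a b c (fun i => d * τ i) (fun i j h => hτ (mul_left_cancel₀ hdC h))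
    (by
      intro i r h
      apply hτirr i (r / d)
      push_cast
      rw [← h]
      field_simp)
    (by
      intro i
      have h0 := hprod (τ i)
      rw [Finset.prod_eq_zero (Finset.mem_univ i) (sub_self _)] at h0
      rw [← haC, ← hbC, ← hcC]
      linear_combination -(d : ℂ) ^ 3 * h0) (|(d : ℝ)| ^ 3)
  have hfin2 := hfin.preimage (f := fun x : ℤ × ℤ => (d * x.1 - a * x.2, x.2)) (by
    rintro ⟨x1, x2⟩ _ ⟨y1, y2⟩ _ h
    simp only [Prod.mk.injEq] at h
    obtain ⟨h1, rfl⟩ := h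
    have : x1 = y1 := mul_left_cancel₀ hd (by linarith)
    rw [this])
  refine ⟨hfin2.toFinset.image fun x => x.1 * θ + x.2 * θ ^ 2, ?_⟩
  rintro η ⟨A, hdet, hA⟩
  obtain ⟨h0, h1, h2⟩ := matRel_rows hA
  refine ⟨A 1 1 * θ + A 1 2 * θ ^ 2, Finset.mem_image.mpr ⟨(A 1 1, A 1 2), ?_, rfl⟩, A 1 0,
    by linarith⟩
  rw [Set.Finite.mem_toFinset]
  have hli := eq_zero_of_quadratic θ (by omega)
  obtain ⟨e0, e1, e2⟩ := hli (A 0 0 - 1) (A 0 1) (A 0 2) (by push_cast; linarith)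
  have e0' : A 0 0 = 1 := by exact_mod_cast sub_eq_zero.mp e0
  have e1' : A 0 1 = 0 := by exact_mod_cast e1
  have e2' : A 0 2 = 0 := by exact_mod_cast e2
  rw [Matrix.det_fin_three, e0', e1', e2'] at hdet
  generalize A 1 0 = s at *
  generalize A 1 1 = x at *
  generalize A 1 2 = y at *
  obtain ⟨-, f1, f2⟩ := hli (s ^ 2 - 2 * x * y * w + y ^ 2 * u * w - A 2 0)
    (2 * s * x - 2 * x * y * v + y ^ 2 * (u * v - w) - A 2 1)
    (x ^ 2 + 2 * s * y - 2 * x * y * u + y ^ 2 * (u ^ 2 - v) - A 2 2) (by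
      push_cast
      rw [← h1] at h2
      linear_combination -h2 - (2 * x * y + y ^ 2 * θ - y ^ 2 * u) * hθ3)
  have hF : (x ^ 3 - 2 * u * x ^ 2 * y + (u ^ 2 + v) * x * y ^ 2 - (u * v - w) * y ^ 3 : ℚ) = 1 ∨
      (x ^ 3 - 2 * u * x ^ 2 * y + (u ^ 2 + v) * x * y ^ 2 - (u * v - w) * y ^ 3 : ℚ) = -1 := by
    have e : (x ^ 3 - 2 * u * x ^ 2 * y + (u ^ 2 + v) * x * y ^ 2 - (u * v - w) * y ^ 3 : ℚ) =
        ((x * A 2 2 - y * A 2 1 : ℤ) : ℚ) := by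
      push_cast
      linear_combination (x : ℚ) * f2 - y * f1
    rw [e]
    rcases hdet with h | h
    · left; exact_mod_cast (by linarith : x * A 2 2 - y * A 2 1 = 1)
    · right; exact_mod_cast (by linarith : x * A 2 2 - y * A 2 1 = -1)
  -- Vieta's formulas, from the values of the factored polynomial at `0`, `1` and `-1`.
  have v0 := hprod 0
  have v1 := hprod 1
  have v2 := hprod (-1)
  simp only [Fin.prod_univ_three] at v0 v1 v2
  have E3 : τ 0 * τ 1 * τ 2 = -w := by linear_combination -v0
  have E1 : τ 0 + τ 1 + τ 2 = -u := by linear_combination -(v1 + v2) / 2 + v0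
  have E2 : τ 0 * τ 1 + τ 0 * τ 2 + τ 1 * τ 2 = v := by linear_combination (v1 - v2) / 2
  have hval : ∏ i, (((d * x - a * y : ℤ) : ℂ) - d * τ i * y) = (d : ℂ) ^ 3 *
      ((x ^ 3 - 2 * u * x ^ 2 * y + (u ^ 2 + v) * x * y ^ 2 - (u * v - w) * y ^ 3 : ℚ) : ℂ) := by
    push_cast
    rw [← haC, Fin.prod_univ_three]
    set X' : ℂ := x - u * y with hX
    linear_combination (d : ℂ) ^ 3 * (-(X' ^ 2 * y) * E1 + X' * y ^ 2 * E2 - y ^ 3 * E3)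
  change ‖∏ i, (((d * x - a * y : ℤ) : ℂ) - d * τ i * y)‖ ≤ _
  rw [hval, norm_mul, norm_pow, Complex.norm_intCast]
  rcases hF with h | h <;> rw [h] <;> simp

/-- Let `d` be a common denominator of the minimal polynomial. Then `d η = m + k θ` with integers
`m, k`. Since `θ` is an integer combination of `1, η, η²`, comparing the coefficients of `θ` gives
`k ∣ d³`; and `m` matters only modulo `d`. -/
theorem quadratic_case (θ : ℝ) (hθ : IsAlgebraic ℚ θ) (hdeg : (minpoly ℚ θ).natDegree = 2) :
    ∃ S : Finset ℝ, ∀ η : ℝ, matRel θ η → ∃ s ∈ S, ∃ n : ℤ, η = s + n := by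
  have hmonic := minpoly.monic hθ.isIntegral
  have hθ2 : θ ^ 2 + (minpoly ℚ θ).coeff 1 * θ + (minpoly ℚ θ).coeff 0 = 0 := by
    have h := minpoly.aeval ℚ θ
    have h3 : (minpoly ℚ θ).coeff 2 = 1 := by
      conv_lhs => rw [← hdeg]
      exact hmonic.coeff_natDegree
    rw [aeval_eq_sum_range, hdeg] at h
    simp [Finset.sum_range_succ, h3, Rat.smul_def] at h
    linarith
  set u := (minpoly ℚ θ).coeff 1
  set v := (minpoly ℚ θ).coeff 0
  obtain ⟨d, hd, s, t, hs, ht⟩ : ∃ d : ℤ, 0 < d ∧ ∃ s t : ℤ, (d * u : ℚ) = s ∧ (d * v : ℚ) = t := by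
    have hu := u.den_pos
    have hv := v.den_pos
    refine ⟨u.den * v.den, by positivity, u.num * v.den, u.den * v.num, ?_, ?_⟩
    · push_cast; linear_combination (v.den : ℚ) * Rat.mul_den_eq_num u
    · push_cast; linear_combination (u.den : ℚ) * Rat.mul_den_eq_num v
  have hsR : (d * u : ℝ) = s := by exact_mod_cast congrArg (Rat.cast : ℚ → ℝ) hs
  have htR : (d * v : ℝ) = t := by exact_mod_cast congrArg (Rat.cast : ℚ → ℝ) ht
  have hdR : (d : ℝ) ≠ 0 := by exact_mod_cast hd.ne'
  refine ⟨(Finset.Icc 0 d ×ˢ Finset.Icc (-d ^ 3) (d ^ 3)).image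
    fun x => ((x.1 : ℝ) / d + x.2 / d * θ), ?_⟩
  rintro η ⟨A, hdet, hA⟩
  obtain ⟨h0, h1, h2⟩ := matRel_rows hA
  have hinv : ((A.det : ℤ) : ℝ) * θ = (A 1 2 * A 2 0 - A 1 0 * A 2 2 : ℝ) +
      (A 0 0 * A 2 2 - A 0 2 * A 2 0 : ℝ) * η + (A 0 2 * A 1 0 - A 0 0 * A 1 2 : ℝ) * η ^ 2 := by
    rw [Matrix.det_fin_three]
    push_cast
    linear_combination (A 1 2 * A 2 0 - A 1 0 * A 2 2 : ℝ) * h0 +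
      (A 0 0 * A 2 2 - A 0 2 * A 2 0 : ℝ) * h1 + (A 0 2 * A 1 0 - A 0 0 * A 1 2 : ℝ) * h2
  -- `d * η = m + k * θ` with integers `m` and `k`
  set m : ℤ := d * A 1 0 - t * A 1 2 with hm
  set k : ℤ := d * A 1 1 - s * A 1 2 with hk
  have hη : d * η = m + k * θ := by
    rw [hm, hk]; push_cast
    rw [← hsR, ← htR, ← h1]
    linear_combination (d * A 1 2 : ℝ) * hθ2
  obtain ⟨Y, hY⟩ : ∃ Y : ℤ, Y = A 0 0 * A 2 2 - A 0 2 * A 2 0 := ⟨_, rfl⟩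
  obtain ⟨Z, hZ⟩ : ∃ Z : ℤ, Z = A 0 2 * A 1 0 - A 0 0 * A 1 2 := ⟨_, rfl⟩
  obtain ⟨X', hX⟩ : ∃ X' : ℤ, X' = A 1 2 * A 2 0 - A 1 0 * A 2 2 := ⟨_, rfl⟩
  obtain ⟨ε, hε⟩ : ∃ ε : ℤ, ε = A.det := ⟨_, rfl⟩
  have hinv' : (ε : ℝ) * θ = X' + Y * η + Z * η ^ 2 := by
    rw [hε, hinv, hX, hY, hZ]; push_cast; ring
  obtain ⟨-, hcoef⟩ := eq_zero_of_linear θ (by omega)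
    (d ^ 3 * X' + d ^ 2 * Y * m + d * Z * (m ^ 2) - Z * k ^ 2 * t)
    (k * (d ^ 2 * Y + Z * (2 * d * m - k * s)) - d ^ 3 * ε) (by
      push_cast
      rw [← hsR, ← htR]
      linear_combination (-(d : ℝ) ^ 3) * hinv' - (d ^ 2 * Y + d * Z * (d * η + m + k * θ) : ℝ) * hη
        - (d * Z * k ^ 2 : ℝ) * hθ2)
  have hcoefZ : k * (d ^ 2 * Y + Z * (2 * d * m - k * s)) = d ^ 3 * ε := by
    exact_mod_cast sub_eq_zero.mp hcoef
  rw [← hε] at hdet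
  have hdvd : k ∣ d ^ 3 := by
    rcases hdet with h | h <;> rw [h] at hcoefZ
    · exact ⟨_, by rw [hcoefZ, mul_one]⟩
    · exact dvd_neg.mp ⟨_, by rw [hcoefZ, mul_neg_one]⟩
  have habs : |k| ≤ d ^ 3 := by
    have := Int.le_of_dvd (by positivity) ((abs_dvd k _).mpr hdvd)
    exact this
  refine ⟨((m % d : ℤ) : ℝ) / d + k / d * θ, Finset.mem_image.mpr ⟨(m % d, k), ?_, rfl⟩, m / d, ?_⟩
  · rw [Finset.mem_product, Finset.mem_Icc, Finset.mem_Icc]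
    exact ⟨⟨Int.emod_nonneg _ hd.ne', (Int.emod_lt_of_pos _ hd).le⟩, abs_le.mp habs⟩
  · have e : ((m % d : ℤ) : ℝ) + d * ((m / d : ℤ) : ℝ) = m := by
      exact_mod_cast Int.emod_add_mul_ediv m d
    field_simp
    linarith

/-- If `θ` is a real algebraic number of degree 2 or 3 over `ℚ`, then there are only
finitely many values of `η` modulo `ℤ` with `θ ~ η`. -/
theorem stmt10 (θ : ℝ) (hθ : IsAlgebraic ℚ θ)
    (hdeg : (minpoly ℚ θ).natDegree = 2 ∨ (minpoly ℚ θ).natDegree = 3) :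
    ∃ S : Finset ℝ, ∀ η : ℝ, matRel θ η → ∃ s ∈ S, ∃ n : ℤ, η = s + n := by
  exact hdeg.elim (quadratic_case θ hθ) (cubic_case θ hθ)
end

section
/- Let θ be a real number that is either transcendental over ℚ or algebraic of degree at least 5 over ℚ. Let a, b, c, d, e ∈ ℤ with ae − bd = 1, and suppose η ∈ ℝ satisfies η = aθ + bθ² and η² = c + dθ + eθ². Then b = c = d = 0, a = e = 1, and hence η = θ. -/
/-!
Substituting `η = aθ + bθ²` into `η² = c + dθ + eθ²` gives
`b²θ⁴ + 2abθ³ + (a² - e)θ² - dθ - c = 0`. Since `θ` is a root of no nonzero rational polynomial of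
degree at most 4 (`eq_zero_of_aeval_eq_zero`), all coefficients vanish: `b = c = d = 0`, `e = a²`.
The determinant condition becomes `a³ = 1`, so `a = e = 1`.
-/

open Polynomial in
theorem eq_zero_of_aeval_eq_zero {θ : ℝ}
    (hθ : Transcendental ℚ θ ∨ (IsAlgebraic ℚ θ ∧ 5 ≤ (minpoly ℚ θ).natDegree))
    {p : ℚ[X]} (hdeg : p.natDegree ≤ 4) (hp : aeval θ p = 0) : p = 0 := by
  by_contra hne
  rcases hθ with h | ⟨_, h⟩
  · exact h ⟨p, hne, hp⟩
  · have := natDegree_le_of_dvd (minpoly.dvd ℚ θ hp) hne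
    omega

/-- If `θ ∈ ℝ` is transcendental over `ℚ`, or algebraic of degree at least 5,
`a,b,c,d,e ∈ ℤ` satisfy `ae - bd = 1`, and `η ∈ ℝ` satisfies `η = aθ + bθ²`
and `η² = c + dθ + eθ²`, then `b = c = d = 0`, `a = e = 1`, and `η = θ`. -/
theorem stmt11 (θ : ℝ)
    (hθ : Transcendental ℚ θ ∨ (IsAlgebraic ℚ θ ∧ 5 ≤ (minpoly ℚ θ).natDegree))
    (a b c d e : ℤ) (hdet : a * e - b * d = 1) (η : ℝ)
    (hη : η = (a : ℝ) * θ + (b : ℝ) * θ ^ 2)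
    (hη2 : η ^ 2 = (c : ℝ) + (d : ℝ) * θ + (e : ℝ) * θ ^ 2) :
    b = 0 ∧ c = 0 ∧ d = 0 ∧ a = 1 ∧ e = 1 ∧ η = θ := by
  let p : Polynomial ℚ :=
    .C ((b : ℚ) ^ 2) * .X ^ 4 + .C (2 * a * b : ℚ) * .X ^ 3 + .C ((a : ℚ) ^ 2 - e) * .X ^ 2
      + .C (-d : ℚ) * .X + .C (-c : ℚ)
  have hp : p = 0 := by
    refine eq_zero_of_aeval_eq_zero hθ (by simp only [p]; compute_degree) ?_
    rw [hη] at hη2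
    simp [p]
    linear_combination hη2
  have hcoeff (n : ℕ) : p.coeff n = 0 := by simp [hp]
  have h4 := hcoeff 4
  have h2 := hcoeff 2
  have h1 := hcoeff 1
  have h0 := hcoeff 0
  simp only [p, Polynomial.coeff_add, Polynomial.coeff_C_mul, Polynomial.coeff_X,
    Polynomial.coeff_C, Polynomial.coeff_X_pow] at h4 h2 h1 h0
  norm_num at h4 h2 h1 h0
  have he : e = a ^ 2 := by
    have : (a : ℚ) ^ 2 = e := by linarith
    exact_mod_cast this.symm
  subst h4 h1 h0 he
  have ha : a = 1 := by
    have h3 : a ^ 3 = 1 := by linarith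
    rcases Int.eq_one_or_neg_one_of_mul_eq_one (u := a) (v := a ^ 2) (by linarith) with h | h
    · exact h
    · norm_num [h] at h3
  subst ha
  simp [hη]
end

section
/- Let θ be a real number that is either transcendental over ℚ or algebraic of degree at least 5 over ℚ, and let η be a real number. Then θ ~ η if and only if there exists n ∈ ℤ with η = θ + n or η = −θ + n. -/
/-- The hypothesis on `θ` is used only through this: `1, θ, θ², θ³, θ⁴` are linearly
independent over `ℤ`. -/
lemma quartic_relation_trivial {θ : ℝ}
    (hθ : Transcendental ℚ θ ∨ (IsAlgebraic ℚ θ ∧ 5 ≤ (minpoly ℚ θ).natDegree))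
    (a b c d e : ℤ)
    (h : (a : ℝ) + b * θ + c * θ ^ 2 + d * θ ^ 3 + e * θ ^ 4 = 0) :
    a = 0 ∧ b = 0 ∧ c = 0 ∧ d = 0 ∧ e = 0 := by
  open Polynomial in
  set p : ℚ[X] := C (a : ℚ) + C (b : ℚ) * X + C (c : ℚ) * X ^ 2 + C (d : ℚ) * X ^ 3
    + C (e : ℚ) * X ^ 4 with hp
  have hroot : Polynomial.aeval θ p = 0 := by
    simpa [hp] using h
  have hdeg : p.natDegree ≤ 4 := by
    rw [hp]; compute_degree
  have hp0 : p = 0 := by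
    by_contra hne
    rcases hθ with ht | ⟨_, h5⟩
    · exact ht ⟨p, hne, hroot⟩
    · have := Polynomial.natDegree_le_of_dvd (minpoly.dvd ℚ θ hroot) hne
      omega
  have hc (n : ℕ) : p.coeff n = 0 := by rw [hp0, Polynomial.coeff_zero]
  have h0 := hc 0
  have h1 := hc 1
  have h2 := hc 2
  have h3 := hc 3
  have h4 := hc 4
  simp [hp, -map_intCast, -eq_intCast, Polynomial.coeff_X, Polynomial.coeff_C] at h0 h1 h2 h3 h4
  exact ⟨h0, h1, h2, h3, h4⟩

/-- If `θ ∈ ℝ` is transcendental over `ℚ`, or algebraic of degree at least 5, then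
`θ ~ η` if and only if `η = ±θ mod ℤ`. -/
theorem stmt12 (θ : ℝ)
    (hθ : Transcendental ℚ θ ∨ (IsAlgebraic ℚ θ ∧ 5 ≤ (minpoly ℚ θ).natDegree))
    (η : ℝ) :
    matRel θ η ↔ ∃ n : ℤ, η = θ + n ∨ η = -θ + n := by
  constructor
  · rintro ⟨A, hdet, hA⟩
    have r0 := congrFun hA 0
    have r1 := congrFun hA 1
    have r2 := congrFun hA 2
    simp [Matrix.mulVec, dotProduct, Fin.sum_univ_three] at r0 r1 r2
    obtain ⟨h00, h01, h02, -, -⟩ := quartic_relation_trivial hθ (A 0 0 - 1) (A 0 1) (A 0 2) 0 0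
      (by push_cast; linear_combination r0)
    -- Expand `η² = (A₁₀ + A₁₁ θ + A₁₂ θ²)²` and compare with the last row of `A`.
    obtain ⟨-, -, hc2, -, hc4⟩ := quartic_relation_trivial hθ
      (A 1 0 ^ 2 - A 2 0) (2 * A 1 0 * A 1 1 - A 2 1)
      (A 1 1 ^ 2 + 2 * A 1 0 * A 1 2 - A 2 2) (2 * A 1 1 * A 1 2) (A 1 2 ^ 2)
      (by
        push_cast
        rw [← r1] at r2
        linear_combination -r2)
    have h12 : A 1 2 = 0 := by simpa using hc4
    have h00' : A 0 0 = 1 := by linarith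
    have h22 : A 2 2 = A 1 1 ^ 2 := by rw [h12] at hc2; linarith
    have hd : A.det = A 1 1 ^ 3 := by
      rw [Matrix.det_fin_three, h00', h01, h02, h12, h22]; ring
    have hu : IsUnit (A 1 1) := by
      have : IsUnit (A 1 1 ^ 3) := by rw [← hd]; exact Int.isUnit_iff.mpr hdet
      exact (isUnit_pow_iff three_ne_zero).mp this
    refine ⟨A 1 0, ?_⟩
    rcases Int.isUnit_iff.mp hu with h | h
    · left; rw [← r1, h, h12]; push_cast; ring
    · right; rw [← r1, h, h12]; push_cast; ring
  · rintro ⟨n, rfl | rfl⟩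
    · refine ⟨!![1, 0, 0; n, 1, 0; n ^ 2, 2 * n, 1], Or.inl (by simp [Matrix.det_fin_three]), ?_⟩
      ext i
      fin_cases i <;> simp [Matrix.mulVec, dotProduct, Fin.sum_univ_three] <;> ring
    · refine ⟨!![1, 0, 0; n, -1, 0; n ^ 2, -2 * n, 1],
        Or.inr (by simp [Matrix.det_fin_three]), ?_⟩
      ext i
      fin_cases i <;> simp [Matrix.mulVec, dotProduct, Fin.sum_univ_three] <;> ring
end

section
/- Let θ be a real algebraic number of degree 4 over ℚ with minimal polynomial x⁴ + λ₃x³ + λ₂x² + λ₁x + λ₀ (λᵢ ∈ ℚ). Let a, b, c, d, e ∈ ℤ with ae − bd = 1 and b ≠ 0, and suppose η ∈ ℝ satisfies η = aθ + bθ² and η² = c + dθ + eθ². Then 2a = bλ₃, e = a² − b²λ₂, d = −b²λ₁, c = −b²λ₀, and (λ₃³/8 − λ₃λ₂/2 + λ₁)·b³ = 1. -/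
/-!
Squaring `η = aθ + bθ²` and comparing with `η² = c + dθ + eθ²` gives
`b²θ⁴ + 2abθ³ + (a² - e)θ² - dθ - c = 0`. Subtracting `b²` times the minimal polynomial leaves a
cubic relation on `θ`, whose coefficients vanish because `θ` has degree 4
(`cubic_coeffs_eq_zero`). This gives the first four identities, and substituting them into
`ae - bd = 1` gives the last one.
-/

open Polynomial

/-- A root of a monic quartic minimal polynomial satisfies no nontrivial cubic relation
over `ℚ`. -/
lemma cubic_coeffs_eq_zero (θ : ℝ) (l0 l1 l2 l3 : ℚ)
    (hmin : minpoly ℚ θ = X ^ 4 + C l3 * X ^ 3 + C l2 * X ^ 2 + C l1 * X + C l0)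
    (p0 p1 p2 p3 : ℚ)
    (h : (p3 : ℝ) * θ ^ 3 + (p2 : ℝ) * θ ^ 2 + (p1 : ℝ) * θ + (p0 : ℝ) = 0) :
    p3 = 0 ∧ p2 = 0 ∧ p1 = 0 ∧ p0 = 0 := by
  have hdeg : (minpoly ℚ θ).degree = 4 := by
    rw [hmin]
    compute_degree!
  have hz : C p3 * X ^ 3 + C p2 * X ^ 2 + C p1 * X + C p0 = 0 := by
    refine eq_zero_of_dvd_of_degree_lt (minpoly.dvd ℚ θ ?_) ?_
    · simpa using h
    · rw [hdeg]
      exact lt_of_le_of_lt degree_cubic_le (by norm_num)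
  have hc := fun n => congrArg (fun q : ℚ[X] => q.coeff n) hz
  refine ⟨?_, ?_, ?_, ?_⟩
  · simpa [coeff_X, coeff_C] using hc 3
  · simpa [coeff_X, coeff_C] using hc 2
  · simpa [coeff_X, coeff_C] using hc 1
  · simpa [coeff_X, coeff_C] using hc 0

/-- If `θ ∈ ℝ` has minimal polynomial `x⁴ + λ₃x³ + λ₂x² + λ₁x + λ₀` over `ℚ`,
`a,b,c,d,e ∈ ℤ` satisfy `ae - bd = 1` with `b ≠ 0`, and `η ∈ ℝ` satisfies
`η = aθ + bθ²` and `η² = c + dθ + eθ²`, then `2a = bλ₃`, `e = a² - b²λ₂`,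
`d = -b²λ₁`, `c = -b²λ₀`, and `(λ₃³/8 - λ₃λ₂/2 + λ₁)·b³ = 1`. -/
theorem stmt13 (θ : ℝ) (l0 l1 l2 l3 : ℚ)
    (hmin : minpoly ℚ θ = X ^ 4 + C l3 * X ^ 3 + C l2 * X ^ 2 + C l1 * X + C l0)
    (a b c d e : ℤ) (hdet : a * e - b * d = 1) (hb : b ≠ 0) (η : ℝ)
    (hη : η = (a : ℝ) * θ + (b : ℝ) * θ ^ 2)
    (hη2 : η ^ 2 = (c : ℝ) + (d : ℝ) * θ + (e : ℝ) * θ ^ 2) :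
    2 * (a : ℚ) = (b : ℚ) * l3 ∧
    (e : ℚ) = (a : ℚ) ^ 2 - (b : ℚ) ^ 2 * l2 ∧
    (d : ℚ) = -(b : ℚ) ^ 2 * l1 ∧
    (c : ℚ) = -(b : ℚ) ^ 2 * l0 ∧
    (l3 ^ 3 / 8 - l3 * l2 / 2 + l1) * (b : ℚ) ^ 3 = 1 := by
  have hroot : θ ^ 4 + l3 * θ ^ 3 + l2 * θ ^ 2 + l1 * θ + l0 = 0 := by
    have := minpoly.aeval ℚ θ
    rw [hmin] at this
    simpa using this
  rw [hη] at hη2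
  obtain ⟨h3, h2, h1, h0⟩ := cubic_coeffs_eq_zero θ l0 l1 l2 l3 hmin
    (-c - b ^ 2 * l0) (-d - b ^ 2 * l1) (a ^ 2 - e - b ^ 2 * l2) (2 * a * b - b ^ 2 * l3) (by
      push_cast
      linear_combination hη2 - (b : ℝ) ^ 2 * hroot)
  have hbq : (b : ℚ) ≠ 0 := by exact_mod_cast hb
  have hdetq : (a : ℚ) * e - b * d = 1 := by exact_mod_cast hdet
  have h3' : 2 * (a : ℚ) = b * l3 := mul_left_cancel₀ hbq (by linear_combination h3)
  have ha : (a : ℚ) = b * l3 / 2 := by linear_combination h3' / 2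
  have he : (e : ℚ) = (a : ℚ) ^ 2 - (b : ℚ) ^ 2 * l2 := by linear_combination -h2
  have hd : (d : ℚ) = -(b : ℚ) ^ 2 * l1 := by linear_combination -h1
  refine ⟨h3', he, hd, by linear_combination -h0, ?_⟩
  rw [he, hd, ha] at hdetq
  linear_combination hdetq
end

section
/- Let θ be a real algebraic number of degree 4 over ℚ with minimal polynomial x⁴ + λ₃x³ + λ₂x² + λ₁x + λ₀ (λᵢ ∈ ℚ), and set μ = λ₃³/8 − λ₃λ₂/2 + λ₁ ∈ ℚ. If η is a real number with θ ~ η, then either there exists n ∈ ℤ with η = θ + n or η = −θ + n, or there exists a nonzero integer k with μ = 1/k³ such that, with ζ = (kλ₃/2)θ + kθ², there exists n ∈ ℤ with η = ζ + n or η = −ζ + n. -/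
/-!
Write `η = a + bθ + cθ²` and `η² = d + eθ + fθ²` with integers `a, …, f`. Since `1, θ, θ², θ³` are
linearly independent over `ℚ` (`coeffs_eq_zero`), the first row of the matrix is `(1, 0, 0)`, so its
determinant is `bf - ce`. Expanding `η²`, reducing `θ⁴` by the minimal polynomial and comparing
coefficients gives `2bc = c²λ₃`, `f = b² + 2ac - c²λ₂` and `e = 2ab - c²λ₁`.

If `c = 0`, the determinant is `b³ = ±1`, so `b = ±1`. Otherwise `b = cλ₃/2`, and the determinant is
`b³ - bc²λ₂ + c³λ₁ = c³μ = ±1`; then `k = ±c`, with the sign of the determinant.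
-/

open Polynomial

/-- The powers `1, θ, θ², θ³` of a number of degree 4 are linearly independent over `ℚ`. -/
lemma coeffs_eq_zero (θ : ℝ) (l0 l1 l2 l3 : ℚ)
    (hmin : minpoly ℚ θ = X ^ 4 + C l3 * X ^ 3 + C l2 * X ^ 2 + C l1 * X + C l0)
    (p q r s : ℚ) (h : (p : ℝ) + q * θ + r * θ ^ 2 + s * θ ^ 3 = 0) :
    p = 0 ∧ q = 0 ∧ r = 0 ∧ s = 0 := by
  have hdeg : (minpoly ℚ θ).degree = 4 := by rw [hmin]; compute_degree!
  have hzero : (C s * X ^ 3 + C r * X ^ 2 + C q * X + C p : ℚ[X]) = 0 := by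
    by_contra hne
    have h1 := minpoly.degree_le_of_ne_zero ℚ θ hne (by simp; linarith)
    have h2 : (C s * X ^ 3 + C r * X ^ 2 + C q * X + C p : ℚ[X]).degree ≤ 3 := by compute_degree
    rw [hdeg] at h1
    exact absurd (h1.trans h2) (by decide)
  have hc (n : ℕ) := congrArg (fun P : ℚ[X] => P.coeff n) hzero
  refine ⟨?_, ?_, ?_, ?_⟩
  · simpa [coeff_X, coeff_C, coeff_X_pow] using hc 0
  · simpa [coeff_X, coeff_C, coeff_X_pow] using hc 1
  · simpa [coeff_X, coeff_C, coeff_X_pow] using hc 2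
  · simpa [coeff_X, coeff_C, coeff_X_pow] using hc 3

/-- Let `θ ∈ ℝ` have minimal polynomial `x⁴ + λ₃x³ + λ₂x² + λ₁x + λ₀` over `ℚ` and set
`μ = λ₃³/8 - λ₃λ₂/2 + λ₁`.  If `θ ~ η`, then either `η = ±θ mod ℤ`, or there is a
nonzero integer `k` with `μ = 1/k³` such that `η = ±ζ mod ℤ` where
`ζ = (kλ₃/2)θ + kθ²`. -/
theorem stmt14 (θ : ℝ) (l0 l1 l2 l3 : ℚ)
    (hmin : minpoly ℚ θ = X ^ 4 + C l3 * X ^ 3 + C l2 * X ^ 2 + C l1 * X + C l0)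
    (η : ℝ) (hrel : matRel θ η) :
    (∃ n : ℤ, η = θ + n ∨ η = -θ + n) ∨
    (∃ k : ℤ, k ≠ 0 ∧ (l3 ^ 3 / 8 - l3 * l2 / 2 + l1) = 1 / (k : ℚ) ^ 3 ∧
      ∃ n : ℤ, η = ((k : ℝ) * (l3 : ℝ) / 2) * θ + (k : ℝ) * θ ^ 2 + n ∨
        η = -(((k : ℝ) * (l3 : ℝ) / 2) * θ + (k : ℝ) * θ ^ 2) + n) := by
  obtain ⟨A, hdet, hA⟩ := hrel
  have hθ : θ ^ 4 + l3 * θ ^ 3 + l2 * θ ^ 2 + l1 * θ + l0 = 0 := by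
    have := minpoly.aeval ℚ θ
    rw [hmin] at this
    simpa using this
  have h0 := congrFun hA 0
  have h1 := congrFun hA 1
  have h2 := congrFun hA 2
  simp [Matrix.mulVec, dotProduct, Fin.sum_univ_three] at h0 h1 h2
  rw [Matrix.det_fin_three] at hdet
  generalize A 0 0 = u at *
  generalize A 0 1 = v at *
  generalize A 0 2 = w at *
  generalize A 1 0 = a at *
  generalize A 1 1 = b at *
  generalize A 1 2 = c at *
  generalize A 2 0 = d at *
  generalize A 2 1 = e at *
  generalize A 2 2 = f at *
  obtain ⟨hu, hv, hw, -⟩ := coeffs_eq_zero θ l0 l1 l2 l3 hmin (u - 1) v w 0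
    (by push_cast; linarith)
  obtain rfl : u = 1 := by exact_mod_cast sub_eq_zero.mp hu
  obtain rfl : v = 0 := by exact_mod_cast hv
  obtain rfl : w = 0 := by exact_mod_cast hw
  obtain ⟨-, he, hf, hs⟩ := coeffs_eq_zero θ l0 l1 l2 l3 hmin
    (a ^ 2 - c ^ 2 * l0 - d) (2 * a * b - c ^ 2 * l1 - e)
    (b ^ 2 + 2 * a * c - c ^ 2 * l2 - f) (2 * b * c - c ^ 2 * l3)
    (by
      push_cast
      rw [← h1] at h2
      linear_combination -h2 - (c : ℝ) ^ 2 * hθ)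
  by_cases hc : c = 0
  · subst hc
    left
    have hf' : f = b ^ 2 := by
      have : (f : ℚ) = b ^ 2 := by push_cast at hf; linarith
      exact_mod_cast this
    subst hf'
    have hb : IsUnit b := by
      rcases hdet with h | h
      · exact IsUnit.of_mul_eq_one (b ^ 2) (by linarith)
      · exact IsUnit.of_mul_eq_one (-b ^ 2) (by linarith)
    refine ⟨a, ?_⟩
    rcases Int.isUnit_iff.mp hb with rfl | rfl
    · left; push_cast at h1; linarith
    · right; push_cast at h1; linarith
  · right
    have hcq : (c : ℚ) ≠ 0 := by exact_mod_cast hc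
    have hb : (b : ℚ) = c * l3 / 2 := by
      apply mul_left_cancel₀ hcq
      linarith
    have hbr : (b : ℝ) = c * l3 / 2 := by exact_mod_cast congrArg (fun x : ℚ => (x : ℝ)) hb
    have hμ : (c : ℚ) ^ 3 * (l3 ^ 3 / 8 - l3 * l2 / 2 + l1) = b * f - c * e := by
      have he' : (e : ℚ) = 2 * a * b - c ^ 2 * l1 := by linarith
      have hf' : (f : ℚ) = b ^ 2 + 2 * a * c - c ^ 2 * l2 := by linarith
      rw [he', hf', hb]
      ring
    rcases hdet with h | h
    · have hq : (b : ℚ) * f - c * e = 1 := by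
        exact_mod_cast (by linarith : b * f - c * e = 1)
      refine ⟨c, hc, ?_, a, Or.inl ?_⟩
      · rw [eq_div_iff (pow_ne_zero 3 hcq)]; linarith
      · rw [← h1, hbr]; ring
    · have hq : (b : ℚ) * f - c * e = -1 := by
        exact_mod_cast (by linarith : b * f - c * e = -1)
      refine ⟨-c, neg_ne_zero.mpr hc, ?_, a, Or.inr ?_⟩
      · push_cast
        rw [eq_div_iff (pow_ne_zero 3 (neg_ne_zero.mpr hcq))]; linarith
      · push_cast
        rw [← h1, hbr]; ring
end

section
/- Let θ be a real algebraic number of degree 4 over ℚ with minimal polynomial x⁴ + λ₃x³ + λ₂x² + λ₁x + λ₀ (λᵢ ∈ ℚ), and set μ = λ₃³/8 − λ₃λ₂/2 + λ₁ ∈ ℚ. Suppose there is no nonzero integer k with μ = 1/k³. Then for every real number η, θ ~ η if and only if there exists n ∈ ℤ with η = θ + n or η = −θ + n. -/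
/-!
Since `θ` has degree 4, the powers `1, θ, θ², θ³` are linearly independent over `ℚ`
(`coeffs_eq_zero`). If `A` realises `θ ~ η`, its first row is therefore `(1, 0, 0)`, and
`η = a + bθ + cθ²` with `η² = d + eθ + fθ²` and `bf - ce = ±1`.

If `c = 0`, comparing coefficients gives `f = b²`, so `b³ = ±1` and `η = ±θ + a`.
If `c ≠ 0`, expand `(a + bθ + cθ²)²` and reduce `θ⁴` by the minimal polynomial. The coefficient of
`θ³` forces `b = cλ₃/2`, and then the coefficients `e, f` give `bf - ce = c³μ`. Hence `c³μ = ±1`,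
i.e. `μ = 1/(±c)³`, which is excluded. The converse is witnessed by explicit
lower triangular matrices.
-/

open Polynomial

lemma quartic_eq_zero (θ : ℝ) (l0 l1 l2 l3 : ℚ)
    (hmin : minpoly ℚ θ = X ^ 4 + C l3 * X ^ 3 + C l2 * X ^ 2 + C l1 * X + C l0) :
    θ ^ 4 + l3 * θ ^ 3 + l2 * θ ^ 2 + l1 * θ + l0 = 0 := by
  have h := minpoly.aeval ℚ θ
  rw [hmin] at h
  simpa only [map_add, map_mul, aeval_C, aeval_X, map_pow, eq_ratCast] using h

/-- Let `θ ∈ ℝ` have minimal polynomial `x⁴ + λ₃x³ + λ₂x² + λ₁x + λ₀` over `ℚ` and set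
`μ = λ₃³/8 - λ₃λ₂/2 + λ₁`.  If there is no nonzero integer `k` with `μ = 1/k³`,
then for every `η ∈ ℝ`, `θ ~ η` if and only if `η = ±θ mod ℤ`. -/
theorem stmt15 (θ : ℝ) (l0 l1 l2 l3 : ℚ)
    (hmin : minpoly ℚ θ = X ^ 4 + C l3 * X ^ 3 + C l2 * X ^ 2 + C l1 * X + C l0)
    (hk : ¬∃ k : ℤ, k ≠ 0 ∧ (l3 ^ 3 / 8 - l3 * l2 / 2 + l1) = 1 / (k : ℚ) ^ 3)
    (η : ℝ) :
    matRel θ η ↔ ∃ n : ℤ, η = θ + n ∨ η = -θ + n := by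
  have hlin := coeffs_eq_zero θ l0 l1 l2 l3 hmin
  have hθ := quartic_eq_zero θ l0 l1 l2 l3 hmin
  constructor
  · rintro ⟨A, hdet, hA⟩
    have r0 := congrFun hA 0
    have r1 := congrFun hA 1
    have r2 := congrFun hA 2
    simp [Matrix.mulVec, dotProduct, Fin.sum_univ_three] at r0 r1 r2
    rw [Matrix.det_fin_three] at hdet
    obtain ⟨h00, h01, h02, -⟩ := hlin (A 0 0 - 1) (A 0 1) (A 0 2) 0 (by
      push_cast; linarith)
    replace h00 : A 0 0 = 1 := by exact_mod_cast sub_eq_zero.mp h00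
    replace h01 : A 0 1 = 0 := by exact_mod_cast h01
    replace h02 : A 0 2 = 0 := by exact_mod_cast h02
    rw [h00, h01, h02] at hdet
    generalize A 1 0 = a at *
    generalize A 1 1 = b at *
    generalize A 1 2 = c at *
    generalize A 2 0 = d at *
    generalize A 2 1 = e at *
    generalize A 2 2 = f at *
    -- The coefficients of `(a + bθ + cθ²)² - (d + eθ + fθ²)`, reduced modulo the quartic.
    obtain ⟨-, h1, h2, h3⟩ := hlin (a ^ 2 - c ^ 2 * l0 - d) (2 * a * b - c ^ 2 * l1 - e)
      (b ^ 2 + 2 * a * c - c ^ 2 * l2 - f) (2 * b * c - c ^ 2 * l3) (by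
        push_cast
        rw [← r1] at r2
        linear_combination -r2 - (c : ℝ) ^ 2 * hθ)
    by_cases hc : c = 0
    · subst hc
      have hf : f = b ^ 2 := by
        have : (f : ℚ) = b ^ 2 := by push_cast at h2; linarith
        exact_mod_cast this
      have hb : b = 1 ∨ b = -1 := by
        apply Int.isUnit_iff.mp
        rcases hdet with h | h
        · exact IsUnit.of_mul_eq_one f (by linarith)
        · exact IsUnit.of_mul_eq_one (-f) (by linarith)
      refine ⟨a, ?_⟩
      rcases hb with rfl | rfl
      · left; push_cast at r1; linarith
      · right; push_cast at r1; linarith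
    · exfalso
      have hcq : (c : ℚ) ≠ 0 := by exact_mod_cast hc
      have hb : (b : ℚ) = c * l3 / 2 := by
        apply mul_left_cancel₀ hcq
        linarith
      have key : (c : ℚ) ^ 3 * (l3 ^ 3 / 8 - l3 * l2 / 2 + l1) = b * f - c * e := by
        have he : (e : ℚ) = 2 * a * b - c ^ 2 * l1 := by linarith
        have hf : (f : ℚ) = b ^ 2 + 2 * a * c - c ^ 2 * l2 := by linarith
        rw [he, hf, hb]
        ring
      apply hk
      rcases hdet with h | h
      · have hq : (b : ℚ) * f - c * e = 1 := by
          have : b * f - c * e = 1 := by linarith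
          exact_mod_cast this
        refine ⟨c, hc, ?_⟩
        rw [eq_div_iff (pow_ne_zero 3 hcq)]
        linarith
      · have hq : (b : ℚ) * f - c * e = -1 := by
          have : b * f - c * e = -1 := by linarith
          exact_mod_cast this
        refine ⟨-c, neg_ne_zero.mpr hc, ?_⟩
        push_cast
        rw [eq_div_iff (pow_ne_zero 3 (neg_ne_zero.mpr hcq))]
        linarith
  · rintro ⟨n, rfl | rfl⟩
    · refine ⟨!![1, 0, 0; n, 1, 0; n ^ 2, 2 * n, 1], Or.inl ?_, ?_⟩
      · simp [Matrix.det_fin_three]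
      · ext i
        fin_cases i <;> simp [Matrix.mulVec, dotProduct, Fin.sum_univ_three] <;> ring
    · refine ⟨!![1, 0, 0; n, -1, 0; n ^ 2, -(2 * n), 1], Or.inr ?_, ?_⟩
      · simp [Matrix.det_fin_three]
      · ext i
        fin_cases i <;> simp [Matrix.mulVec, dotProduct, Fin.sum_univ_three] <;> ring
end

section
/- Let θ be a real algebraic number of degree 2 over ℚ. Then the set of real numbers η with 0 ≤ η < 1 such that the additive subgroup ℤ + ηℤ + η²ℤ of ℝ equals the additive subgroup ℤ + θℤ + θ²ℤ of ℝ is finite. -/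
/-!
Write `η'` for the conjugate of `η` over `ℚ`, and let `a X² + b X + c` and `A X² + B X + C` be the
integral equations of `η` and `θ`, the first one primitive, with `a, A > 0`. The argument bounds
`a`, `b`, `c` in terms of `θ` alone, which leaves finitely many `η`.

* `A² u u'` is an integer for each `u` in `G_θ` (`norm_integral`). By Gauss's lemma in the form
  that the coefficients `a², ab, ac, b², bc, c²` of the squared polynomial are coprime, the norms
  of elements of `G_η` generate `a⁻² ℤ`. Hence `G_η ⊆ G_θ` gives `a² ∣ A²`, so `a ≤ A`
  (`leading_le`).
* Since `θ = s + t η + u η²` with integers `s, t, u`, the number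
  `a (θ - θ') = (η - η') (a t - u b)` is a nonzero integer multiple of `η - η'`, so
  `|η - η'| ≤ A |θ - θ'|`.
* As `0 ≤ η < 1`, this bounds `η'`, and therefore `b = -a (η + η')` and `c = a η η'`.
-/

open Polynomial

lemma mem_closure_one_sq {θ x : ℝ} (h : x ∈ AddSubgroup.closure {(1 : ℝ), θ, θ ^ 2}) :
    ∃ p q r : ℤ, x = p + q * θ + r * θ ^ 2 := by
  induction h using AddSubgroup.closure_induction with
  | mem x hx =>
    rcases hx with rfl | rfl | rfl
    · exact ⟨1, 0, 0, by simp⟩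
    · exact ⟨0, 1, 0, by simp⟩
    · exact ⟨0, 0, 1, by simp⟩
  | zero => exact ⟨0, 0, 0, by simp⟩
  | add x y _ _ hx hy =>
    obtain ⟨p, q, r, rfl⟩ := hx
    obtain ⟨p', q', r', rfl⟩ := hy
    exact ⟨p + p', q + q', r + r', by push_cast; ring⟩
  | neg x _ hx =>
    obtain ⟨p, q, r, rfl⟩ := hx
    exact ⟨-p, -q, -r, by push_cast; ring⟩

/-- A quadratic irrational `θ` has a conjugate `θ' ≠ θ`: their sum and product are rational, and
every rational polynomial relation satisfied by `θ` is satisfied by `θ'`. -/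
lemma exists_conj (θ : ℝ) (hθ : IsAlgebraic ℚ θ) (hdeg : (minpoly ℚ θ).natDegree = 2) :
    ∃ θ' : ℝ, ∃ S N : ℚ, θ ≠ θ' ∧ θ + θ' = S ∧ θ * θ' = N ∧
      ∀ P : ℚ[X], aeval θ P = 0 → aeval θ' P = 0 := by
  have hint : IsIntegral ℚ θ := hθ.isIntegral
  have hmon := minpoly.monic hint
  have hf : minpoly ℚ θ = X ^ 2 + C ((minpoly ℚ θ).coeff 1) * X + C ((minpoly ℚ θ).coeff 0) := by
    have h2 : (minpoly ℚ θ).coeff 2 = 1 := by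
      rw [← hdeg]; exact hmon
    conv_lhs => rw [(minpoly ℚ θ).as_sum_range_C_mul_X_pow, hdeg]
    simp [Finset.sum_range_succ, h2]
    ring
  set s := (minpoly ℚ θ).coeff 1
  set n := (minpoly ℚ θ).coeff 0
  have h0 : θ ^ 2 + s * θ + n = 0 := by
    have := minpoly.aeval ℚ θ
    rw [hf] at this
    simpa using this
  refine ⟨-s - θ, -s, n, ?_, by push_cast; ring, by linear_combination -h0, ?_⟩
  · intro h
    have hr : θ = algebraMap ℚ ℝ (-s / 2) := by
      simp; linarith
    have : (minpoly ℚ θ).natDegree = 1 := by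
      rw [hr, minpoly.eq_X_sub_C]; simp
    omega
  · intro P hP
    obtain ⟨Q, rfl⟩ := minpoly.dvd ℚ θ hP
    rw [map_mul, hf]
    have : (-(s : ℝ) - θ) ^ 2 + s * (-s - θ) + n = 0 := by linear_combination h0
    simp [this]

/-- Two real numbers with rational sum and product are the roots of a primitive integral quadratic
polynomial `a X² + b X + c`; primitivity is recorded as a Bézout relation. -/
lemma exists_primitive (x y : ℝ) (S N : ℚ) (hS : x + y = S) (hN : x * y = N) :
    ∃ a b c : ℤ, 0 < a ∧ (b : ℝ) = -a * (x + y) ∧ (c : ℝ) = a * (x * y) ∧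
      ∃ k l m : ℤ, k * a + l * b + m * c = 1 := by
  -- clear denominators, then divide by the gcd of the three coefficients
  obtain ⟨a, b, c, ha, hb, hc⟩ : ∃ a b c : ℤ, 0 < a ∧ (b : ℚ) = -a * S ∧ (c : ℚ) = a * N := by
    refine ⟨S.den * N.den, -(S.num * N.den), N.num * S.den, ?_, ?_, ?_⟩
    · have := S.pos; have := N.pos; positivity
    · push_cast
      linear_combination (-(N.den : ℚ)) * (Rat.mul_den_eq_num S).symm
    · push_cast
      linear_combination (S.den : ℚ) * (Rat.mul_den_eq_num N).symm
  set g : ℤ := gcd a (gcd b c) with hg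
  have hg0 : g ≠ 0 := by
    intro h
    rw [hg, gcd_eq_zero_iff] at h
    omega
  have hgpos : 0 < g := lt_of_le_of_ne (by rw [hg, ← Int.coe_gcd]; positivity) hg0.symm
  obtain ⟨a', ha'⟩ : g ∣ a := gcd_dvd_left _ _
  obtain ⟨b', hb'⟩ : g ∣ b := (gcd_dvd_right _ _).trans (gcd_dvd_left _ _)
  obtain ⟨c', hc'⟩ : g ∣ c := (gcd_dvd_right _ _).trans (gcd_dvd_right _ _)
  have hgR : (g : ℝ) ≠ 0 := by exact_mod_cast hg0
  refine ⟨a', b', c', ?_, ?_, ?_, ?_⟩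
  · rw [ha'] at ha
    exact pos_of_mul_pos_right ha hgpos.le
  · have hb2 : (b : ℝ) = -a * S := by exact_mod_cast hb
    rw [← hS, ha', hb'] at hb2
    push_cast at hb2
    apply mul_left_cancel₀ hgR
    linear_combination hb2
  · have hc2 : (c : ℝ) = a * N := by exact_mod_cast hc
    rw [← hN, ha', hc'] at hc2
    push_cast at hc2
    apply mul_left_cancel₀ hgR
    linear_combination hc2
  · obtain ⟨l, m, hlm⟩ := exists_gcd_eq_mul_add_mul b c
    obtain ⟨k, j, hkj⟩ := exists_gcd_eq_mul_add_mul a (gcd b c)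
    refine ⟨k, l * j, m * j, ?_⟩
    apply mul_left_cancel₀ hg0
    have hkj' : g = a * k + (b * l + c * m) * j := by rw [← hlm]; exact hkj
    rw [ha', hb', hc'] at hkj'
    linear_combination -hkj'

lemma norm_integral {θ θ' : ℝ} {A B C : ℤ} (hB : (B : ℝ) = -A * (θ + θ'))
    (hC : (C : ℝ) = A * (θ * θ')) (p q r : ℤ) :
    ∃ n : ℤ, (A : ℝ) ^ 2 * ((p + q * θ + r * θ ^ 2) * (p + q * θ' + r * θ' ^ 2)) = n := by
  refine ⟨A ^ 2 * p ^ 2 + q ^ 2 * A * C + r ^ 2 * C ^ 2 - p * q * A * B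
    + p * r * (B ^ 2 - 2 * A * C) - q * r * B * C, ?_⟩
  push_cast
  rw [hB, hC]
  ring

/-- Comparison of leading coefficients: if `η` and `η²` lie in `G_θ`, compatibly with conjugation,
then the leading coefficient `a` of the primitive polynomial of `η` is at most that of any integral
quadratic polynomial with roots `θ, θ'`. -/
lemma leading_le {θ θ' η η' : ℝ} {A B C a b c : ℤ} (hA : 0 < A) (ha : 0 < a)
    (hB : (B : ℝ) = -A * (θ + θ')) (hC : (C : ℝ) = A * (θ * θ'))
    (hb : (b : ℝ) = -a * (η + η')) (hc : (c : ℝ) = a * (η * η'))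
    (hprim : ∃ k l m : ℤ, k * a + l * b + m * c = 1) {p q r p₂ q₂ r₂ : ℤ}
    (h1 : η = p + q * θ + r * θ ^ 2) (h1' : η' = p + q * θ' + r * θ' ^ 2)
    (h2 : η ^ 2 = p₂ + q₂ * θ + r₂ * θ ^ 2) (h2' : η' ^ 2 = p₂ + q₂ * θ' + r₂ * θ' ^ 2) :
    a ≤ A := by
  obtain ⟨k, l, m, hklm⟩ := hprim
  -- norms of `η`, `η²`, `1 + η`, `1 + η²`, `η + η²`; the last three give the polar terms
  obtain ⟨n₁, hn₁⟩ := norm_integral hB hC p q r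
  obtain ⟨n₂, hn₂⟩ := norm_integral hB hC p₂ q₂ r₂
  obtain ⟨n₃, hn₃⟩ := norm_integral hB hC (1 + p) q r
  obtain ⟨n₄, hn₄⟩ := norm_integral hB hC (1 + p₂) q₂ r₂
  obtain ⟨n₅, hn₅⟩ := norm_integral hB hC (p + p₂) (q + q₂) (r + r₂)
  push_cast at hn₃ hn₄ hn₅
  have e₁ : (A : ℝ) ^ 2 * (η * η') = n₁ := by rw [← hn₁, ← h1, ← h1']
  have e₂ : (A : ℝ) ^ 2 * (η ^ 2 * η' ^ 2) = n₂ := by rw [← hn₂, ← h2, ← h2']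
  have e₃ : (A : ℝ) ^ 2 * ((1 + η) * (1 + η')) = n₃ := by rw [← hn₃, h1, h1']; ring
  have e₄ : (A : ℝ) ^ 2 * ((1 + η ^ 2) * (1 + η' ^ 2)) = n₄ := by rw [← hn₄, h2, h2']; ring
  have e₅ : (A : ℝ) ^ 2 * ((η + η ^ 2) * (η' + η' ^ 2)) = n₅ := by
    rw [← hn₅, h2, h2', h1, h1']; ring
  have f₃ : (A : ℝ) ^ 2 * (η + η') = n₃ - A ^ 2 - n₁ := by
    rw [← e₃, ← e₁]; ring
  have f₄ : (A : ℝ) ^ 2 * (η ^ 2 + η' ^ 2) = n₄ - A ^ 2 - n₂ := by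
    rw [← e₄, ← e₂]; ring
  have f₅ : (A : ℝ) ^ 2 * (η * η' * (η + η')) = n₅ - n₁ - n₂ := by
    rw [← e₅, ← e₁, ← e₂]; ring
  have hone : (k * a + l * b + m * c : ℝ) = 1 := by exact_mod_cast hklm
  -- `A² = A² (k a + l b + m c)²`, where `A² / a²` times each of `a², ab, ac, b², bc, c²` is one of
  -- the integers found above, up to sign and with `b² = (b² - 2ac) + 2ac`
  have hdvd : a ^ 2 ∣ A ^ 2 := by
    refine ⟨k ^ 2 * A ^ 2 + l ^ 2 * ((n₄ - A ^ 2 - n₂) + 2 * n₁) + m ^ 2 * n₂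
      - 2 * k * l * (n₃ - A ^ 2 - n₁) + 2 * k * m * n₁ - 2 * l * m * (n₅ - n₁ - n₂), ?_⟩
    have : (A : ℝ) ^ 2 = a ^ 2 * (k ^ 2 * A ^ 2 + l ^ 2 * ((n₄ - A ^ 2 - n₂) + 2 * n₁) + m ^ 2 * n₂
      - 2 * k * l * (n₃ - A ^ 2 - n₁) + 2 * k * m * n₁ - 2 * l * m * (n₅ - n₁ - n₂)) := by
      rw [← f₃, ← f₄, ← f₅, ← e₁, ← e₂]
      calc (A : ℝ) ^ 2 = A ^ 2 * (k * a + l * b + m * c) ^ 2 := by rw [hone]; ring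
        _ = _ := by rw [hb, hc]; ring
    exact_mod_cast this
  have := Int.le_of_dvd (by positivity) hdvd
  exact (pow_le_pow_iff_left₀ ha.le hA.le two_ne_zero).1 this

lemma finite_quadratic_roots {a b c : ℤ} (ha : a ≠ 0) :
    {x : ℝ | a * x ^ 2 + b * x + c = 0}.Finite := by
  have hp : (C (a : ℝ) * X ^ 2 + C (b : ℝ) * X + C (c : ℝ)) ≠ 0 := by
    intro h
    have haR : (a : ℝ) ≠ 0 := by exact_mod_cast ha
    have := leadingCoeff_quadratic (b := (b : ℝ)) (c := (c : ℝ)) haR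
    rw [h, leadingCoeff_zero] at this
    exact haR this.symm
  refine (rootSet_finite (C (a : ℝ) * X ^ 2 + C (b : ℝ) * X + C (c : ℝ)) ℝ).subset ?_
  intro x hx
  rw [mem_rootSet]
  exact ⟨hp, by simpa using hx⟩

/-- If `θ ∈ ℤ + ηℤ + η²ℤ`, compatibly with conjugation, then `a (θ - θ')` is a nonzero integer
multiple of `η - η'`. -/
lemma abs_sub_conj_le {θ θ' η η' : ℝ} {a b : ℤ} (ha : 0 < a) (hne : θ ≠ θ')
    (hb : (b : ℝ) = -a * (η + η')) {s t u : ℤ}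
    (h : θ = s + t * η + u * η ^ 2) (h' : θ' = s + t * η' + u * η' ^ 2) :
    |η - η'| ≤ a * |θ - θ'| := by
  have key : (a : ℝ) * (θ - θ') = (η - η') * ((a * t - u * b : ℤ) : ℝ) := by
    push_cast; rw [hb, h, h']; ring
  have haR : (0 : ℝ) < a := by exact_mod_cast ha
  have hz : (a * t - u * b : ℤ) ≠ 0 := by
    intro hz
    rw [hz] at key
    simp [haR.ne', sub_eq_zero] at key
    exact hne key
  have h1 : (1 : ℝ) ≤ |((a * t - u * b : ℤ) : ℝ)| := by
    exact_mod_cast Int.one_le_abs hz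
  calc |η - η'| ≤ |η - η'| * |((a * t - u * b : ℤ) : ℝ)| :=
        le_mul_of_one_le_right (abs_nonneg _) h1
    _ = a * |θ - θ'| := by rw [← abs_mul, ← key, abs_mul, abs_of_pos haR]

/-- If `θ` is a real algebraic number of degree 2 over `ℚ`, then the set of
`η ∈ [0,1)` with `ℤ + ηℤ + η²ℤ = ℤ + θℤ + θ²ℤ` (as additive subgroups of `ℝ`)
is finite. -/
theorem stmt16 (θ : ℝ) (hθ : IsAlgebraic ℚ θ) (hdeg : (minpoly ℚ θ).natDegree = 2) :
    {η : ℝ | 0 ≤ η ∧ η < 1 ∧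
      AddSubgroup.closure {1, η, η ^ 2} = AddSubgroup.closure {(1 : ℝ), θ, θ ^ 2}}.Finite := by
  obtain ⟨θ', S, N, hne, hS, hN, hconj⟩ := exists_conj θ hθ hdeg
  obtain ⟨A, B, C₀, hA, hB, hC, -⟩ := exists_primitive θ θ' S N hS hN
  have hAR : (0 : ℝ) < A := by exact_mod_cast hA
  set R : ℝ := A * |θ - θ'| with hR
  have hR0 : 0 ≤ R := by positivity
  set M : ℤ := ⌈(A : ℝ) * (2 + R)⌉ with hM
  refine Set.Finite.subset
    (s := ⋃ a ∈ Set.Icc 1 A, ⋃ b ∈ Set.Icc (-M) M, ⋃ c ∈ Set.Icc (-M) M,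
      {x : ℝ | (a : ℝ) * x ^ 2 + b * x + c = 0}) ?_ ?_
  · refine (Set.finite_Icc _ _).biUnion fun a ha => (Set.finite_Icc _ _).biUnion fun b _ =>
      (Set.finite_Icc _ _).biUnion fun c _ => finite_quadratic_roots ?_
    have := ha.1
    omega
  rintro η ⟨hη0, hη1, hG⟩
  obtain ⟨p, q, r, h1⟩ := mem_closure_one_sq (θ := θ) (x := η)
    (hG ▸ AddSubgroup.subset_closure (by simp))
  obtain ⟨p₂, q₂, r₂, h2⟩ := mem_closure_one_sq (θ := θ) (x := η ^ 2)
    (hG ▸ AddSubgroup.subset_closure (by simp))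
  obtain ⟨s, t, u, h3⟩ := mem_closure_one_sq (θ := η) (x := θ)
    (hG ▸ AddSubgroup.subset_closure (by simp))
  obtain ⟨η', h1'⟩ : ∃ η' : ℝ, η' = p + q * θ' + r * θ' ^ 2 := ⟨_, rfl⟩
  -- transport the relations for `η²` and `θ` along the conjugation `θ ↦ θ'`
  have h2' : η' ^ 2 = p₂ + q₂ * θ' + r₂ * θ' ^ 2 := by
    have := hconj ((C (p : ℚ) + C (q : ℚ) * X + C (r : ℚ) * X ^ 2) ^ 2
      - (C (p₂ : ℚ) + C (q₂ : ℚ) * X + C (r₂ : ℚ) * X ^ 2))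
      (by simp [-map_intCast, ← h1, ← h2])
    simpa [← h1', sub_eq_zero] using this
  have h3' : θ' = s + t * η' + u * η' ^ 2 := by
    have := hconj (X - (C (s : ℚ) + C (t : ℚ) * (C (p : ℚ) + C (q : ℚ) * X + C (r : ℚ) * X ^ 2)
      + C (u : ℚ) * (C (p : ℚ) + C (q : ℚ) * X + C (r : ℚ) * X ^ 2) ^ 2))
      (by simp [← h1, ← h3])
    simpa [← h1', sub_eq_zero] using this
  have hS' : η + η' = ((2 * p + q * S + r * (S ^ 2 - 2 * N) : ℚ) : ℝ) := by
    push_cast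
    rw [h1, h1', ← hS, ← hN]; ring
  have hN' : η * η' = ((p ^ 2 + q ^ 2 * N + r ^ 2 * N ^ 2 + p * q * S + p * r * (S ^ 2 - 2 * N)
      + q * r * N * S : ℚ) : ℝ) := by
    push_cast
    rw [h1, h1', ← hS, ← hN]; ring
  obtain ⟨a, b, c, ha, hb, hc, hprim⟩ := exists_primitive η η' _ _ hS' hN'
  have haA : a ≤ A := leading_le hA ha hB hC hb hc hprim h1 h1' h2 h2'
  have haAR : (a : ℝ) ≤ A := by exact_mod_cast haA
  have haR : (0 : ℝ) < a := by exact_mod_cast ha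
  have hdiff : |η - η'| ≤ R :=
    (abs_sub_conj_le ha hne hb h3 h3').trans (by rw [hR]; gcongr)
  obtain ⟨hd1, hd2⟩ := abs_le.1 hdiff
  have hsum : |η + η'| ≤ 2 + R := abs_le.2 ⟨by linarith, by linarith⟩
  have hprod : |η * η'| ≤ 2 + R := by
    rw [abs_mul, abs_of_nonneg hη0]
    have : |η'| ≤ 2 + R := abs_le.2 ⟨by linarith, by linarith⟩
    nlinarith [abs_nonneg η']
  have hbM : |b| ≤ M := by
    have : |(b : ℝ)| ≤ A * (2 + R) := by
      rw [hb, abs_mul, abs_neg, abs_of_pos haR]; gcongr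
    exact_mod_cast this.trans (Int.le_ceil _)
  have hcM : |c| ≤ M := by
    have : |(c : ℝ)| ≤ A * (2 + R) := by
      rw [hc, abs_mul, abs_of_pos haR]; gcongr
    exact_mod_cast this.trans (Int.le_ceil _)
  simp only [Set.mem_iUnion]
  refine ⟨a, ⟨ha, haA⟩, b, abs_le.1 hbM, c, abs_le.1 hcM, ?_⟩
  simp only [Set.mem_ofPred_eq]
  rw [hb, hc]; ring
end

section
/- The set of integer solutions (a, b) ∈ ℤ × ℤ of the equation a³ − ab² − b³ = 1 is exactly {(1, 0), (0, −1), (1, −1), (−1, −1), (4, 3)}. -/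
/-!
Let `θ` be the real root of `x³ = x + 1`. The left-hand side of the equation is the norm of
`a - bθ` in `ℤ[θ]`, so a solution is a unit of norm `1`.

*Units.* Every element of `ℤ[θ]` of norm `1` is a power of `θ` (`exists_zpow_of_norm_one`): after
multiplying by a power of `θ` its real embedding lies in `[1, θ)`, so its complex embedding has
absolute value at most `1`, which bounds the coordinates; only `1` survives. Hence `a - bθ = θ ^ n`,
and the task is to find all `n : ℤ` for which the `θ²`-coordinate of `θ ^ n` vanishes.

*Skolem's method.* One has `θ ^ 24 ≡ 1` modulo `5`, and modulo `5` the `θ²`-coordinate of `θ ^ n`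
vanishes exactly for `n ≡ 0, 1, 3, 11, 20` modulo `24`. These classes contain the solutions
`n = 0, 1, 3, -13, -4`. If `θ ^ N = 1 + p s` with `p` an odd prime, then
`θ ^ (N p ^ j m) ≡ 1 + p ^ (j + 1) m s` modulo `p ^ (j + 2)`, so when the `θ²`-coordinate of
`θ ^ r s` is prime to `p`, the vanishing of the coordinates of `θ ^ r` and `θ ^ (r + N k)`
forces `p ^ j ∣ k` for all `j`, that is `k = 0` (`skolem`). This applies with `p = 5`, `N = 24` to all
classes but that of `0`. For the class of `0`, reduction modulo `7` shows `48 ∣ n`, and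
the criterion applies with `p = 7`, `N = 48`.
-/

/-- The norm of `x + yθ + zθ²` from `ℚ(θ)` to `ℚ`, where `θ³ = θ + 1`. -/
def thetaNorm (x y z : ℤ) : ℤ :=
  x * ((x + z) ^ 2 - y * (y + z)) - y * (z * (x + z) - y ^ 2) + z * (z * (y + z) - y * (x + z))

/-- The ring `ℤ[t]`, for `t³ = t + 1`, as the set of reals `x + yt + zt²` with `x, y, z : ℤ`. -/
def thetaRing (t : ℝ) (ht : t ^ 3 = t + 1) : Subring ℝ where
  carrier := {v | ∃ x y z : ℤ, v = x + y * t + z * t ^ 2}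
  mul_mem' := by
    rintro _ _ ⟨x, y, z, rfl⟩ ⟨a, b, c, rfl⟩
    refine ⟨x * a + (y * c + z * b), x * b + y * a + (y * c + z * b) + z * c,
      x * c + y * b + z * a + z * c, ?_⟩
    push_cast
    linear_combination ((y * c + z * b : ℝ) + z * c * t) * ht
  one_mem' := ⟨1, 0, 0, by simp⟩
  add_mem' := by
    rintro _ _ ⟨x, y, z, rfl⟩ ⟨a, b, c, rfl⟩
    exact ⟨x + a, y + b, z + c, by push_cast; ring⟩
  zero_mem' := ⟨0, 0, 0, by simp⟩
  neg_mem' := by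
    rintro _ ⟨x, y, z, rfl⟩
    exact ⟨-x, -y, -z, by push_cast; ring⟩

lemma eq_zero_of_forall_pow_dvd {p k : ℤ} (hp : 2 ≤ p) (h : ∀ j : ℕ, p ^ j ∣ k) : k = 0 := by
  by_contra hk
  have h1 := Int.le_of_dvd (abs_pos.mpr hk) ((dvd_abs _ _).mpr (h k.natAbs))
  have h2 : (k.natAbs : ℤ) < 2 ^ k.natAbs := by exact_mod_cast Nat.lt_two_pow_self
  have h3 : (2 : ℤ) ^ k.natAbs ≤ p ^ k.natAbs := by gcongr
  rw [Int.abs_eq_natAbs] at h1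
  omega

/-- The norm is the product of the real embedding and the squared absolute value of the complex
embedding, the latter written as a sum of two squares. -/
lemma thetaNorm_eq {t : ℝ} (ht : t ^ 3 = t + 1) (x y z : ℤ) :
    (thetaNorm x y z : ℝ) = (x + y * t + z * t ^ 2) *
      ((x - y * t / 2 + z * (1 - t ^ 2 / 2)) ^ 2 + (3 * t ^ 2 - 4) / 4 * (y - t * z) ^ 2) := by
  unfold thetaNorm
  push_cast
  grind

/-- Infinite descent at the prime `2`, modulo which `x³ - x - 1` is irreducible. -/
lemma pow_two_dvd_of_thetaNorm (n : ℕ) : ∀ x y z : ℤ, thetaNorm x y z = 0 →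
    2 ^ n ∣ x ∧ 2 ^ n ∣ y ∧ 2 ^ n ∣ z := by
  induction n with
  | zero => simp
  | succ n ih =>
    intro x y z h
    have key : ∀ x y z : ZMod 2, x * ((x + z) ^ 2 - y * (y + z)) - y * (z * (x + z) - y ^ 2)
        + z * (z * (y + z) - y * (x + z)) = 0 → x = 0 ∧ y = 0 ∧ z = 0 := by decide
    have h' := congrArg (Int.cast : ℤ → ZMod 2) h
    unfold thetaNorm at h'
    push_cast at h'
    obtain ⟨hx, hy, hz⟩ := key _ _ _ h'
    obtain ⟨x, rfl⟩ := (ZMod.intCast_zmod_eq_zero_iff_dvd _ 2).mp hx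
    obtain ⟨y, rfl⟩ := (ZMod.intCast_zmod_eq_zero_iff_dvd _ 2).mp hy
    obtain ⟨z, rfl⟩ := (ZMod.intCast_zmod_eq_zero_iff_dvd _ 2).mp hz
    have h8 : 8 * thetaNorm x y z = 0 := by
      rw [← h]; unfold thetaNorm; push_cast; ring
    obtain ⟨h1, h2, h3⟩ := ih x y z (by omega)
    rw [pow_succ']
    exact ⟨mul_dvd_mul_left _ h1, mul_dvd_mul_left _ h2, mul_dvd_mul_left _ h3⟩

lemma coords_eq_zero {t : ℝ} (ht : t ^ 3 = t + 1) {x y z : ℤ}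
    (h : (x + y * t + z * t ^ 2 : ℝ) = 0) : x = 0 ∧ y = 0 ∧ z = 0 := by
  have hN : thetaNorm x y z = 0 := by
    have := thetaNorm_eq ht x y z
    rw [h, zero_mul] at this
    exact_mod_cast this
  have := fun n => pow_two_dvd_of_thetaNorm n x y z hN
  exact ⟨eq_zero_of_forall_pow_dvd le_rfl fun n => (this n).1,
    eq_zero_of_forall_pow_dvd le_rfl fun n => (this n).2.1,
    eq_zero_of_forall_pow_dvd le_rfl fun n => (this n).2.2⟩

lemma zpow_mul_coords {t : ℝ} (ht : t ^ 3 = t + 1) (h0 : t ≠ 0) (n : ℤ) (x y z : ℤ) :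
    ∃ x' y' z' : ℤ, t ^ n * (x + y * t + z * t ^ 2) = x' + y' * t + z' * t ^ 2 ∧
      thetaNorm x' y' z' = thetaNorm x y z := by
  induction n using Int.induction_on with
  | zero => exact ⟨x, y, z, by simp, rfl⟩
  | succ i ih =>
    obtain ⟨a, b, c, h, hN⟩ := ih
    refine ⟨c, a + c, b, ?_, ?_⟩
    · rw [zpow_add_one₀ h0, mul_right_comm, h]
      push_cast
      linear_combination (c : ℝ) * ht
    · rw [← hN]; unfold thetaNorm; ring
  | pred i ih =>
    obtain ⟨a, b, c, h, hN⟩ := ih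
    refine ⟨b - a, c, a, ?_, ?_⟩
    · rw [zpow_sub_one₀ h0, mul_right_comm, h]
      field_simp
      push_cast
      linear_combination (-a : ℝ) * ht
    · rw [← hN]; unfold thetaNorm; ring

lemma zpow_mem_thetaRing {t : ℝ} (ht : t ^ 3 = t + 1) (h0 : t ≠ 0) (n : ℤ) :
    t ^ n ∈ thetaRing t ht := by
  obtain ⟨x, y, z, h, -⟩ := zpow_mul_coords ht h0 n 1 0 0
  exact ⟨x, y, z, by rw [← h]; simp⟩

set_option maxHeartbeats 1000000 in
/-- The only element of norm `1` whose real embedding lies in the fundamental domain `[1, θ)` for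
multiplication by `θ` is `1`. -/
lemma eq_one_of_norm_one {t : ℝ} (ht : t ^ 3 = t + 1) (hl : 1.32 < t) (hu : t < 1.33)
    {x y z : ℤ} (hN : thetaNorm x y z = 1) (h1 : 1 ≤ x + y * t + z * t ^ 2)
    (h2 : x + y * t + z * t ^ 2 < t) : (x + y * t + z * t ^ 2 : ℝ) = 1 := by
  have hQ := thetaNorm_eq ht x y z
  rw [hN] at hQ
  push_cast at hQ
  have ht2l : 1.742 < t ^ 2 := by nlinarith
  have ht2u : t ^ 2 < 1.769 := by nlinarith
  set u : ℝ := x + y * t + z * t ^ 2 with hu'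
  set R : ℝ := x - y * t / 2 + z * (1 - t ^ 2 / 2) with hR
  set e : ℝ := y - t * z with he
  have hs : 0 < (3 * t ^ 2 - 4) / 4 := by linarith
  have hle : R ^ 2 + (3 * t ^ 2 - 4) / 4 * e ^ 2 ≤ 1 := by
    have : 0 ≤ R ^ 2 + (3 * t ^ 2 - 4) / 4 * e ^ 2 := by positivity
    nlinarith
  have hR1 : |R| ≤ 1 := by
    refine abs_le_of_sq_le_sq ?_ (by norm_num)
    nlinarith [mul_nonneg hs.le (sq_nonneg e)]
  have he1 : |e| ≤ 1.82 := by
    refine abs_le_of_sq_le_sq ?_ (by norm_num)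
    nlinarith [sq_nonneg R, sq_nonneg e]
  obtain ⟨hRa, hRb⟩ := abs_le.mp hR1
  obtain ⟨hea, heb⟩ := abs_le.mp he1
  -- `z` is determined by the real embedding `u` and the real and imaginary parts (up to a scalar)
  -- `R`, `e` of the complex one.
  have hid : (3 * t ^ 2 - 1) * z = u - R - 3 / 2 * t * e := by
    rw [hu', hR, he]; ring
  have hz1 : (z : ℝ) < 2 := by nlinarith
  have hz2 : (-2 : ℝ) < z := by nlinarith
  have hz1' : z < 2 := by exact_mod_cast hz1
  have hz2' : -2 < z := by exact_mod_cast hz2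
  clear_value R e u
  clear hQ hle hs hid hR hR1 hRa hRb he1
  interval_cases z <;> push_cast at he hu' <;>
  · have hy1 : (y : ℝ) < 4 := by linarith
    have hy2 : (-4 : ℝ) < y := by linarith
    have hy1' : y < 4 := by exact_mod_cast hy1
    have hy2' : -4 < y := by exact_mod_cast hy2
    interval_cases y <;> push_cast at he hu' <;> first
    | (exfalso; linarith)
    | (have hx1 : (x : ℝ) < 8 := by linarith
       have hx2 : (-8 : ℝ) < x := by linarith
       have hx1' : x < 8 := by exact_mod_cast hx1
       have hx2' : -8 < x := by exact_mod_cast hx2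
       interval_cases x <;> first
       | exact absurd hN (by decide)
       | (rw [hu']; norm_num; done)
       | (exfalso; push_cast at hu'; linarith))

/-- The unit theorem for `ℤ[θ]`. -/
lemma exists_zpow_of_norm_one {t : ℝ} (ht : t ^ 3 = t + 1) (hl : 1.32 < t) (hu : t < 1.33)
    {x y z : ℤ} (hN : thetaNorm x y z = 1) : ∃ n : ℤ, (x + y * t + z * t ^ 2 : ℝ) = t ^ n := by
  have h0 : 0 < t := by linarith
  have hpos : (0 : ℝ) < x + y * t + z * t ^ 2 := by
    have hQ := thetaNorm_eq ht x y z
    rw [hN] at hQ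
    push_cast at hQ
    have hs : 0 ≤ (3 * t ^ 2 - 4) / 4 := by nlinarith
    exact pos_of_mul_pos_left (hQ ▸ one_pos) (by positivity)
  obtain ⟨n, hn1, hn2⟩ := exists_mem_Ico_zpow hpos (by linarith : 1 < t)
  obtain ⟨a, b, c, h, hN'⟩ := zpow_mul_coords ht h0.ne' (-n) x y z
  rw [hN] at hN'
  have hnp : 0 < t ^ n := zpow_pos h0 n
  rw [zpow_neg] at h
  have h1 := eq_one_of_norm_one ht hl hu hN' (by rw [← h]; field_simp; linarith)
    (by rw [← h]; rw [zpow_add_one₀ h0.ne'] at hn2; field_simp; linarith)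
  refine ⟨n, ?_⟩
  rw [h1] at h
  field_simp at h
  linarith

/-- First-order expansion of integer powers of a unit `1 + p h b` of `S`, modulo `p² h`. -/
lemma zpow_first_order (S : Subring ℝ) (p h : ℤ) {b v : ℝ} (hb : b ∈ S) (hv : v ∈ S)
    (hinv : (1 + p * h * b) * v = 1) (k : ℤ) :
    ∃ c ∈ S, (1 + p * h * b) ^ k = 1 + p * h * (k * b + p * c) := by
  have h0 : 1 + p * h * b ≠ 0 := left_ne_zero_of_mul_eq_one hinv
  have hi : (1 + p * h * b)⁻¹ = v := inv_eq_of_mul_eq_one_right hinv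
  have hZ : ∀ m : ℤ, (m : ℝ) ∈ S := fun m => intCast_mem S m
  induction k using Int.induction_on with
  | zero => exact ⟨0, S.zero_mem, by simp⟩
  | succ i ih =>
    obtain ⟨c, hc, e⟩ := ih
    refine ⟨c + h * ((i : ℤ) : ℝ) * b * b + p * h * c * b, ?_, ?_⟩
    · exact S.add_mem (S.add_mem hc (S.mul_mem (S.mul_mem (S.mul_mem (hZ _) (hZ _)) hb) hb))
        (S.mul_mem (S.mul_mem (S.mul_mem (hZ _) (hZ _)) hc) hb)
    · rw [zpow_add_one₀ h0, e]; push_cast; ring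
  | pred i ih =>
    obtain ⟨c, hc, e⟩ := ih
    refine ⟨c * v + h * b * b * v * (1 + ((i : ℤ) : ℝ)), ?_, ?_⟩
    · exact S.add_mem (S.mul_mem hc hv) (S.mul_mem (S.mul_mem (S.mul_mem (S.mul_mem (hZ _) hb) hb)
        hv) (S.add_mem S.one_mem (hZ _)))
    · rw [zpow_sub_one₀ h0, e, hi]
      push_cast
      linear_combination (1 - p * h * b - p * h * b * (i : ℝ)) * hinv

/-- The `p`-th power of `1 + p h b` is `1 + p² h b` modulo `p³ h`; this holds for odd primes `p`. -/
def PowStep (p : ℕ) : Prop :=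
  ∀ (S : Subring ℝ) (h : ℤ), ∀ b ∈ S, ∃ c ∈ S,
    (1 + p * h * b) ^ p = 1 + p * (p * h) * (b + p * c)

lemma powStep_five : PowStep 5 := by
  intro S h b hb
  have hh : (h : ℝ) ∈ S := intCast_mem S h
  refine ⟨2 * h * b ^ 2 + 10 * h ^ 2 * b ^ 3 + 25 * h ^ 3 * b ^ 4 + 25 * h ^ 4 * b ^ 5, ?_, by push_cast; ring⟩
  repeat' first
    | exact hh
    | exact hb
    | exact pow_mem hh _
    | exact pow_mem hb _
    | exact ofNat_mem S _
    | apply add_mem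
    | apply mul_mem

lemma powStep_seven : PowStep 7 := by
  intro S h b hb
  have hh : (h : ℝ) ∈ S := intCast_mem S h
  refine ⟨3 * h * b ^ 2 + 35 * h ^ 2 * b ^ 3 + 245 * h ^ 3 * b ^ 4 + 1029 * h ^ 4 * b ^ 5
    + 2401 * h ^ 5 * b ^ 6 + 2401 * h ^ 6 * b ^ 7, ?_, by push_cast; ring⟩
  repeat' first
    | exact hh
    | exact hb
    | exact pow_mem hh _
    | exact pow_mem hb _
    | exact ofNat_mem S _
    | apply add_mem
    | apply mul_mem

/-- Skolem's criterion: if `t ^ N = 1 + p s`, and `t ^ r s` has `t²`-coordinate `a₂` prime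
to `p`, then at most one exponent in the class of `r` modulo `N` gives a power of `t` with vanishing
`t²`-coordinate. -/
lemma skolem {t : ℝ} (ht : t ^ 3 = t + 1) (h0 : t ≠ 0) {p : ℕ} (hp : p.Prime) (hstep : PowStep p)
    {N : ℤ} {s : ℝ} (hs : s ∈ thetaRing t ht) (hN : t ^ N = 1 + p * s) {r : ℤ} {a₀ a₁ a₂ : ℤ}
    (hrs : t ^ r * s = a₀ + a₁ * t + a₂ * t ^ 2) (ha : ¬ (p : ℤ) ∣ a₂) {x y : ℤ}
    (hr : t ^ r = x + y * t) {k : ℤ} {x' y' : ℤ} (hk : t ^ (r + N * k) = x' + y' * t) : k = 0 := by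
  have hpow : ∀ j : ℕ, ∃ w ∈ thetaRing t ht,
      t ^ (N * (p : ℤ) ^ j) = 1 + (p : ℤ) * ((p : ℤ) ^ j : ℤ) * (s + p * w) := by
    intro j
    induction j with
    | zero => exact ⟨0, Subring.zero_mem _, by simpa using hN⟩
    | succ j ih =>
      obtain ⟨w, hw, e⟩ := ih
      have hp' : (p : ℝ) ∈ thetaRing t ht := natCast_mem _ p
      obtain ⟨c, hc, e'⟩ := hstep (thetaRing t ht) ((p : ℤ) ^ j) (s + p * w)
        (Subring.add_mem _ hs (Subring.mul_mem _ hp' hw))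
      refine ⟨w + c, Subring.add_mem _ hw hc, ?_⟩
      rw [pow_succ, ← mul_assoc, zpow_mul, e, zpow_natCast]
      push_cast at e' ⊢
      rw [e']
      ring
  have hdvd : ∀ j : ℕ, (p : ℤ) ^ j ∣ k := by
    intro j
    induction j with
    | zero => simp
    | succ j ih =>
      obtain ⟨m, rfl⟩ := ih
      obtain ⟨w, hw, e⟩ := hpow j
      have hp' : (p : ℝ) ∈ thetaRing t ht := natCast_mem _ p
      obtain ⟨c, hc, e'⟩ := zpow_first_order (thetaRing t ht) p ((p : ℤ) ^ j)
        (Subring.add_mem _ hs (Subring.mul_mem _ hp' hw))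
        (zpow_mem_thetaRing ht h0 (-(N * (p : ℤ) ^ j)))
        (by rw [← e, ← zpow_add₀ h0]; simp) m
      obtain ⟨d₀, d₁, d₂, hd⟩ : t ^ r * (m * w + c) ∈ thetaRing t ht :=
        Subring.mul_mem _ (zpow_mem_thetaRing ht h0 r)
          (Subring.add_mem _ (Subring.mul_mem _ (intCast_mem _ m) hw) hc)
      rw [zpow_add₀ h0, ← mul_assoc, zpow_mul, e, e'] at hk
      have hpj : (p : ℤ) * (p : ℤ) ^ j ≠ 0 := by
        have := hp.pos
        positivity
      -- Comparison of the `t²`-coordinates, after subtraction of `t ^ r`.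
      have hz := (coords_eq_zero ht (x := p * p ^ j * (m * a₀ + p * d₀) + x - x')
        (y := p * p ^ j * (m * a₁ + p * d₁) + y - y')
        (z := p * p ^ j * (m * a₂ + p * d₂)) (by
          push_cast at hk ⊢
          linear_combination hk - hr - (p * p ^ j * m : ℝ) * hrs
            - (p * p ^ j * p : ℝ) * hd)).2.2
      have hz' := (mul_eq_zero.mp hz).resolve_left hpj
      have hm : (p : ℤ) ∣ m * a₂ := ⟨-d₂, by linarith⟩
      have hm' := ((Nat.prime_iff_prime_int.mp hp).dvd_or_dvd hm).resolve_right ha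
      rw [pow_succ]
      exact mul_dvd_mul_left _ hm'
  exact eq_zero_of_forall_pow_dvd (by exact_mod_cast hp.two_le) hdvd

/-- If `t ^ N ≡ 1` modulo `p`, then the `t²`-coordinate of `t ^ n` modulo `p` depends only on `n`
modulo `N`. -/
lemma dvd_coord {t : ℝ} (ht : t ^ 3 = t + 1) (h0 : t ≠ 0) (p : ℕ)
    {N : ℤ} {s : ℝ} (hs : s ∈ thetaRing t ht) (hN : t ^ N = 1 + p * s) {r : ℤ} {a₀ a₁ a₂ : ℤ}
    (hr : t ^ r = a₀ + a₁ * t + a₂ * t ^ 2) {k : ℤ} {x y : ℤ}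
    (hk : t ^ (r + N * k) = x + y * t) : (p : ℤ) ∣ a₂ := by
  obtain ⟨c, hc, e⟩ := zpow_first_order (thetaRing t ht) p 1 hs (zpow_mem_thetaRing ht h0 (-N))
    (by
      have : (1 + ((p : ℤ) : ℝ) * ((1 : ℤ) : ℝ) * s) = t ^ N := by rw [hN]; push_cast; ring
      rw [this, ← zpow_add₀ h0]; simp) k
  obtain ⟨d₀, d₁, d₂, hd⟩ : t ^ r * (k * s + p * c) ∈ thetaRing t ht :=
    Subring.mul_mem _ (zpow_mem_thetaRing ht h0 r) (Subring.add_mem _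
      (Subring.mul_mem _ (intCast_mem _ k) hs) (Subring.mul_mem _ (natCast_mem _ p) hc))
  push_cast at e
  rw [mul_one] at e
  rw [zpow_add₀ h0, zpow_mul, hN, e] at hk
  have hz := (coords_eq_zero ht (x := a₀ + p * d₀ - x) (y := a₁ + p * d₁ - y)
    (z := a₂ + p * d₂) (by
      push_cast
      linear_combination hk - hr - (p : ℝ) * hd)).2.2
  exact ⟨-d₂, by linarith⟩

/-- Coordinates of `θ ^ n` with respect to `1, θ, θ²`, for `n : ℕ`. -/
def powCoords : ℕ → ℤ × ℤ × ℤ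
  | 0 => (1, 0, 0)
  | n + 1 => ((powCoords n).2.2, (powCoords n).1 + (powCoords n).2.2, (powCoords n).2.1)

lemma pow_eq_powCoords {t : ℝ} (ht : t ^ 3 = t + 1) (n : ℕ) :
    t ^ n = (powCoords n).1 + (powCoords n).2.1 * t + (powCoords n).2.2 * t ^ 2 := by
  induction n with
  | zero => simp [powCoords]
  | succ n ih =>
    rw [pow_succ, ih]
    simp only [powCoords]
    push_cast
    linear_combination ((powCoords n).2.2 : ℝ) * ht

lemma zpow_neg_four {t : ℝ} (ht : t ^ 3 = t + 1) :
    t ^ (-4 : ℤ) = (-1 : ℤ) + (1 : ℤ) * t := by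
  rw [zpow_neg]
  apply inv_eq_of_mul_eq_one_right
  have := pow_eq_powCoords ht 4
  norm_num [powCoords] at this
  have h4 : t ^ (4 : ℤ) = t + t ^ 2 := by exact_mod_cast this
  rw [h4]
  push_cast
  linear_combination ht

lemma zpow_neg_thirteen {t : ℝ} (ht : t ^ 3 = t + 1) :
    t ^ (-13 : ℤ) = (4 : ℤ) + (-3 : ℤ) * t := by
  rw [zpow_neg]
  apply inv_eq_of_mul_eq_one_right
  have := pow_eq_powCoords ht 13
  norm_num [powCoords] at this
  have h13 : t ^ (13 : ℤ) = 7 + 12 * t + 9 * t ^ 2 := by exact_mod_cast this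
  rw [h13]
  push_cast
  linear_combination (-27 : ℝ) * ht

/-- The exponents for which the `t²`-coordinate of `t ^ n` vanishes. -/
lemma exponent_cases {t : ℝ} (ht : t ^ 3 = t + 1) (h0 : t ≠ 0) {n x y : ℤ}
    (hn : t ^ n = x + y * t) : n = 0 ∨ n = 1 ∨ n = 3 ∨ n = -4 ∨ n = -13 := by
  have h24 : t ^ (24 : ℤ) = 151 + 265 * t + 200 * t ^ 2 := by
    have := pow_eq_powCoords ht 24
    norm_num [powCoords] at this
    exact_mod_cast this
  have h48 : t ^ (48 : ℤ) = 128801 + 226030 * t + 170625 * t ^ 2 := by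
    have := pow_eq_powCoords ht 48
    norm_num [powCoords] at this
    exact_mod_cast this
  have hs5 : (30 + 53 * t + 40 * t ^ 2) ∈ thetaRing t ht := ⟨30, 53, 40, by push_cast; ring⟩
  have hs7 : (18400 + 32290 * t + 24375 * t ^ 2) ∈ thetaRing t ht :=
    ⟨18400, 32290, 24375, by push_cast; ring⟩
  have hN5 : t ^ (24 : ℤ) = 1 + (5 : ℕ) * (30 + 53 * t + 40 * t ^ 2) := by
    rw [h24]; push_cast; ring
  have hN7 : t ^ (48 : ℤ) = 1 + (7 : ℕ) * (18400 + 32290 * t + 24375 * t ^ 2) := by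
    rw [h48]; push_cast; ring
  have hm4 := zpow_neg_four ht
  have hm13 := zpow_neg_thirteen ht
  obtain ⟨r, k, hr, rfl⟩ : ∃ (r : ℕ) (k : ℤ), r < 24 ∧ n = r + 24 * k :=
    ⟨(n % 24).toNat, n / 24, by omega, by omega⟩
  have hz := dvd_coord ht h0 5 hs5 hN5 (r := r)
    (by rw [zpow_natCast]; exact pow_eq_powCoords ht r) hn
  have hcls : ∀ r < 24, ((5 : ℕ) : ℤ) ∣ (powCoords r).2.2 →
      r = 0 ∨ r = 1 ∨ r = 3 ∨ r = 20 ∨ r = 11 := by decide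
  rcases hcls r hr hz with rfl | rfl | rfl | rfl | rfl
  · rcases Int.even_or_odd' k with ⟨m, rfl | rfl⟩
    · have hm : m = 0 := skolem ht h0 (by norm_num) powStep_seven hs7 hN7 (r := 0) (a₀ := 18400)
        (a₁ := 32290) (a₂ := 24375) (by push_cast; simp) (by decide) (x := 1) (y := 0) (by simp)
        (x' := x) (y' := y) (by rw [← hn]; congr 1; push_cast; ring)
      omega
    · have := dvd_coord ht h0 7 hs7 hN7 (r := 24) (a₀ := 151) (a₁ := 265) (a₂ := 200)
        (by rw [h24]; push_cast; rfl) (k := m) (x := x) (y := y)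
        (by rw [← hn]; congr 1; push_cast; ring)
      omega
  · have hk : k = 0 := skolem ht h0 (by norm_num) powStep_five hs5 hN5 (r := 1) (a₀ := 40)
      (a₁ := 70) (a₂ := 53) (by push_cast; rw [zpow_one]; linear_combination 40 * ht)
      (by decide) (x := 0) (y := 1) (by simp) hn
    omega
  · have h3 : t ^ (3 : ℤ) = (1 : ℤ) + (1 : ℤ) * t := by
      push_cast; rw [one_mul, add_comm, ← ht]; norm_cast
    have hk : k = 0 := skolem ht h0 (by norm_num) powStep_five hs5 hN5 (r := 3) (a₀ := 70)
      (a₁ := 123) (a₂ := 93) (by rw [h3]; push_cast; linear_combination 40 * ht)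
      (by decide) h3 hn
    omega
  · have hk : k + 1 = 0 := skolem ht h0 (by norm_num) powStep_five hs5 hN5 (r := -4) (a₀ := 10)
      (a₁ := 17) (a₂ := 13) (by rw [hm4]; push_cast; linear_combination 40 * ht)
      (by decide) hm4 (x' := x) (y' := y) (by rw [← hn]; congr 1; push_cast; ring)
    omega
  · have hk : k + 1 = 0 := skolem ht h0 (by norm_num) powStep_five hs5 hN5 (r := -13) (a₀ := 0)
      (a₁ := 2) (a₂ := 1) (by rw [hm13]; push_cast; linear_combination (-120) * ht)
      (by decide) hm13 (x' := x) (y' := y) (by rw [← hn]; congr 1; push_cast; ring)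
    omega

/-- The integer solutions of the Thue equation `a³ - ab² - b³ = 1` are exactly
`(1,0)`, `(0,-1)`, `(1,-1)`, `(-1,-1)`, and `(4,3)`. -/
theorem stmt17 :
    {p : ℤ × ℤ | p.1 ^ 3 - p.1 * p.2 ^ 2 - p.2 ^ 3 = 1} =
      ({((1 : ℤ), (0 : ℤ)), (0, -1), (1, -1), (-1, -1), (4, 3)} : Set (ℤ × ℤ)) := by
  obtain ⟨t, ⟨hl, hu⟩, ht⟩ : ∃ t ∈ Set.Ioo (1.32 : ℝ) 1.33, t ^ 3 - t = 1 :=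
    intermediate_value_Ioo (by norm_num) (f := fun t : ℝ => t ^ 3 - t)
      (by fun_prop) ⟨by norm_num, by norm_num⟩
  have ht : t ^ 3 = t + 1 := by linarith
  have h0 : t ≠ 0 := by linarith
  ext ⟨a, b⟩
  simp only [Set.mem_ofPred_eq, Set.mem_insert_iff, Set.mem_singleton_iff, Prod.mk.injEq]
  constructor
  · intro h
    obtain ⟨n, hn⟩ := exists_zpow_of_norm_one ht hl hu (x := a) (y := -b) (z := 0)
      (by rw [← h]; unfold thetaNorm; ring)
    have hn' : t ^ n = a + (-b : ℤ) * t := by rw [← hn]; push_cast; ring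
    have huniq : ∀ x y : ℤ, t ^ n = x + y * t → a = x ∧ b = -y := by
      intro x y e
      have := coords_eq_zero ht (x := a - x) (y := -b - y) (z := 0)
        (by push_cast at hn' ⊢; linear_combination e - hn')
      omega
    rcases exponent_cases ht h0 hn' with rfl | rfl | rfl | rfl | rfl
    · have := huniq 1 0 (by simp)
      omega
    · have := huniq 0 1 (by simp)
      omega
    · have := huniq 1 1 (by push_cast; rw [one_mul, add_comm, ← ht]; norm_cast)
      omega
    · have := huniq (-1) 1 (zpow_neg_four ht)
      omega
    · have := huniq 4 (-3) (zpow_neg_thirteen ht)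
      omega
  · rintro (⟨rfl, rfl⟩ | ⟨rfl, rfl⟩ | ⟨rfl, rfl⟩ | ⟨rfl, rfl⟩ | ⟨rfl, rfl⟩) <;> norm_num
end
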